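/- arXiv:2310.17635 — 3 statements merged into one kernel-verified Lean document; each statement's English description precedes it below -/
import Mathlib

section
/- Fix δ > 0 and C > 0. There exists c = c(δ, C) > 0 such that the following holds. Let d ∈ [1+δ, δ^{−1}], let n be a positive integer, and let (𝐝, 𝐝′) be a degree sequence of length m which is (d, c, C)-regular (with respect to n) and for which the set of m×m {0,1}-matrices with column sums 𝐝 and row sums 𝐝′ is nonempty. Let M be a uniformly random m×m {0,1}-matrix with column sums 𝐝 and row sums 𝐝′. For an integer k with 0 ≤ k ≤ cm, let 𝒴_k be the collection of subsets S ⊆ [m] of size k such that |Σ_{i∈S} d_i − k| ≤ k/√(log(m/k)) and |U(S)| ≤ α(k)·k. Then E|𝒴_k| ≤ c^{−1}·exp(−ck). -/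
/-- `α(x) = (log (n/x))⁻²`. -/
noncomputable def alphaFn (n : ℕ) (x : ℝ) : ℝ :=
  ((Real.log ((n : ℝ) / x)) ^ 2)⁻¹

/-- Column sums of a `{0,1}`-matrix given as a `Bool`-valued matrix. -/
def colSum {m : ℕ} (M : Fin m → Fin m → Bool) (j : Fin m) : ℕ :=
  ∑ i, if M i j then 1 else 0

/-- Row sums of a `{0,1}`-matrix given as a `Bool`-valued matrix. -/
def rowSum {m : ℕ} (M : Fin m → Fin m → Bool) (i : Fin m) : ℕ :=
  ∑ j, if M i j then 1 else 0

/-- The set of unique neighbours `U(S)` of a set `S` of columns of a square `{0,1}`-matrix. -/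
def uniqueNbrSetB {m : ℕ} (M : Fin m → Fin m → Bool) (S : Finset (Fin m)) : Set (Fin m) :=
  {i | (i ∈ S ∧ ∀ j ∈ S, M i j = false) ∨
       (i ∉ S ∧ {j : Fin m | j ∈ S ∧ M i j = true}.ncard = 1)}

/-- A pair of degree sequences `(𝐝, 𝐝′)` of length `m` is `(d, μ, C)`-regular with respect
to `n`. -/
def DegRegular (n m : ℕ) (ds ds' : Fin m → ℕ) (d μ C : ℝ) : Prop :=
  (m : ℝ) / n ∈ Set.Icc (1 - μ) (1 + μ) ∧
  (∀ S : Finset (Fin m), S.Nonempty →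
    (∑ i ∈ S, ((ds i : ℝ) + (ds' i : ℝ))) ≤
      C * (d + Real.log ((m : ℝ) / S.card)) * S.card) ∧
  (∑ i, (ds i : ℝ)) ∈ Set.Icc ((1 - μ) * (d * m)) ((1 + μ) * (d * m)) ∧
  (∑ i, (ds' i : ℝ)) ∈ Set.Icc ((1 - μ) * (d * m)) ((1 + μ) * (d * m)) ∧
  (∑ i, d ^ (-(ds i : ℝ)) * (ds' i : ℝ)) ∈
    Set.Icc ((1 - μ) * (Real.exp 1 * d * Real.exp (-d) * m))
      ((1 + μ) * (Real.exp 1 * d * Real.exp (-d) * m))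

open Finset in
lemma une_colSum_card {m : ℕ} (M : Fin m → Fin m → Bool) (j : Fin m) :
    colSum M j = (univ.filter (fun i => M i j = true)).card := by
  rw [Finset.card_filter]; rfl

open Finset in
lemma une_rowSum_card {m : ℕ} (M : Fin m → Fin m → Bool) (i : Fin m) :
    rowSum M i = (univ.filter (fun j => M i j = true)).card := by
  rw [Finset.card_filter]; rfl

/-- flip the entries of the `2×2` submatrix with rows `i,a` and columns `j,b` -/
def uneSwitch {m : ℕ} (i j a b : Fin m) (M : Fin m → Fin m → Bool) : Fin m → Fin m → Bool :=
  fun x y => if (x = i ∨ x = a) ∧ (y = j ∨ y = b) then !(M x y) else M x y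

lemma uneSwitch_invol {m : ℕ} (i j a b : Fin m) (M : Fin m → Fin m → Bool) :
    uneSwitch i j a b (uneSwitch i j a b M) = M := by
  funext x y
  unfold uneSwitch
  split_ifs <;> simp

lemma uneSwitch_colSum {m : ℕ} (i j a b : Fin m) (M : Fin m → Fin m → Bool)
    (h1 : M i j = true) (h2 : M a b = true) (h3 : M i b = false) (h4 : M a j = false) (y : Fin m) :
    colSum (uneSwitch i j a b M) y = colSum M y := by
  unfold colSum
  by_cases hy : y = j ∨ y = b
  · rw [← Equiv.sum_comp (Equiv.swap i a) (fun x => if M x y = true then 1 else 0)]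
    apply Finset.sum_congr rfl
    intro x _
    have : uneSwitch i j a b M x y = M (Equiv.swap i a x) y := by
      unfold uneSwitch
      by_cases hxi : x = i
      · subst hxi; rcases hy with rfl | rfl <;> simp [*]
      · by_cases hxa : x = a
        · subst hxa; rcases hy with rfl | rfl <;> simp [*]
        · rw [Equiv.swap_apply_of_ne_of_ne hxi hxa]; simp [*]
    rw [this]
  · apply Finset.sum_congr rfl
    intro x _
    simp [uneSwitch, hy]

lemma uneSwitch_rowSum {m : ℕ} (i j a b : Fin m) (M : Fin m → Fin m → Bool)
    (h1 : M i j = true) (h2 : M a b = true) (h3 : M i b = false) (h4 : M a j = false) (x : Fin m) :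
    rowSum (uneSwitch i j a b M) x = rowSum M x := by
  unfold rowSum
  by_cases hx : x = i ∨ x = a
  · rw [← Equiv.sum_comp (Equiv.swap j b) (fun y => if M x y = true then 1 else 0)]
    apply Finset.sum_congr rfl
    intro y _
    have : uneSwitch i j a b M x y = M x (Equiv.swap j b y) := by
      unfold uneSwitch
      by_cases hxi : y = j
      · subst hxi; rcases hx with rfl | rfl <;> simp [*]
      · by_cases hxa : y = b
        · subst hxa; rcases hx with rfl | rfl <;> simp [*]
        · rw [Equiv.swap_apply_of_ne_of_ne hxi hxa]; simp [*]
    rw [this]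
  · apply Finset.sum_congr rfl
    intro y _
    simp [uneSwitch, hx]

open Finset in
lemma une_forward {m : ℕ} (ds ds' : Fin m → ℕ) (M : Fin m → Fin m → Bool)
    (hM : (∀ j, colSum M j = ds j) ∧ ∀ i, rowSum M i = ds' i)
    (E : Finset (Fin m × Fin m)) (i j : Fin m)
    (D F : ℕ) (hD : ∀ i, ds i ≤ D) (hD' : ∀ i, ds' i ≤ D)
    (hF : F + E.card + 2 * (D * D) ≤ ∑ i, ds i) :
    F ≤ (univ.filter (fun p : Fin m × Fin m => M p.1 p.2 = true ∧ p ∉ E ∧ M i p.2 = false ∧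
      M p.1 j = false)).card := by
  classical
  set good := univ.filter (fun p : Fin m × Fin m => M p.1 p.2 = true ∧ p ∉ E ∧ M i p.2 = false ∧
      M p.1 j = false) with hgood
  set bad1 := (univ.filter (fun b => M i b = true)).biUnion
    (fun b => (univ.filter (fun a => M a b = true)).image (fun a => (a, b))) with hb1
  set bad2 := (univ.filter (fun a => M a j = true)).biUnion
    (fun a => (univ.filter (fun b => M a b = true)).image (fun b => (a, b))) with hb2
  have c1 : bad1.card ≤ D * D := by
    refine (card_biUnion_le_card_mul _ _ D ?_).trans ?_
    · intro b _
      refine card_image_le.trans ?_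
      rw [← une_colSum_card, hM.1]; exact hD b
    · rw [← une_rowSum_card, hM.2]; exact Nat.mul_le_mul_right _ (hD' i)
  have c2 : bad2.card ≤ D * D := by
    refine (card_biUnion_le_card_mul _ _ D ?_).trans ?_
    · intro b _
      refine card_image_le.trans ?_
      rw [← une_rowSum_card, hM.2]; exact hD' b
    · rw [← une_colSum_card, hM.1]; exact Nat.mul_le_mul_right _ (hD j)
  have cE : (univ.filter (fun p : Fin m × Fin m => M p.1 p.2 = true)).card = ∑ i, ds i := by
    rw [Finset.card_filter, Fintype.sum_prod_type_right]
    apply Finset.sum_congr rfl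
    intro b _
    rw [← hM.1 b]; simp [colSum]
  have sub : (univ.filter (fun p : Fin m × Fin m => M p.1 p.2 = true)) ⊆
      good ∪ E ∪ bad1 ∪ bad2 := by
    rintro ⟨a, b⟩ hp
    simp only [mem_filter, mem_univ, true_and] at hp
    simp only [hgood, hb1, hb2, mem_union, mem_filter, mem_univ, true_and, mem_biUnion, mem_image,
      Prod.mk.injEq]
    by_cases h1 : (a, b) ∈ E
    · simp [h1]
    · cases h2 : M i b
      · cases h3 : M a j
        · simp [*]
        · right; exact ⟨a, h3, b, hp, rfl, rfl⟩
      · left; right; exact ⟨b, h2, a, hp, rfl, rfl⟩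
  have := card_le_card sub
  have u1 := card_union_le (good ∪ E ∪ bad1) bad2
  have u2 := card_union_le (good ∪ E) bad1
  have u3 := card_union_le good E
  omega

open Finset in
lemma une_switching {m : ℕ} (ds ds' : Fin m → ℕ) (G : Finset (Fin m → Fin m → Bool))
    (hG : ∀ M, M ∈ G ↔ ((∀ j, colSum M j = ds j) ∧ ∀ i, rowSum M i = ds' i))
    (E : Finset (Fin m × Fin m)) (i j : Fin m) (hE : ∀ p ∈ E, p.1 ≠ i)
    (D F : ℕ) (hD : ∀ i, ds i ≤ D) (hD' : ∀ i, ds' i ≤ D)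
    (hF : F + E.card + 2 * (D * D) ≤ ∑ i, ds i) :
    (G.filter (fun M => (∀ p ∈ E, M p.1 p.2 = true) ∧ M i j = true)).card * F ≤
      (G.filter (fun M => ∀ p ∈ E, M p.1 p.2 = true)).card *
        ((ds j - (E.filter (fun p => p.2 = j)).card) * ds' i) := by
  classical
  set A := G.filter (fun M => (∀ p ∈ E, M p.1 p.2 = true) ∧ M i j = true) with hA
  set X := G.filter (fun M => ∀ p ∈ E, M p.1 p.2 = true) with hX
  let Y : Finset (Σ _ : (Fin m → Fin m → Bool), Fin m × Fin m) :=
    A.sigma (fun M => univ.filter (fun p : Fin m × Fin m =>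
      M p.1 p.2 = true ∧ p ∉ E ∧ M i p.2 = false ∧ M p.1 j = false))
  let Z : Finset (Σ _ : (Fin m → Fin m → Bool), Fin m × Fin m) :=
    X.sigma (fun M => (univ.filter (fun a => M a j = true ∧ (a, j) ∉ E)) ×ˢ
      (univ.filter (fun b => M i b = true)))
  have hY : A.card * F ≤ Y.card := by
    rw [card_sigma, ← smul_eq_mul]
    apply card_nsmul_le_sum
    intro M hM
    exact une_forward ds ds' M ((hG M).1 (mem_filter.1 hM).1) E i j D F hD hD' hF
  have hZ : Z.card = X.card * ((ds j - (E.filter (fun p => p.2 = j)).card) * ds' i) := by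
    rw [card_sigma, ← smul_eq_mul, ← sum_const]
    apply sum_congr rfl
    intro M hM
    have hM1 := (hG M).1 (mem_filter.1 hM).1
    have hM2 := (mem_filter.1 hM).2
    rw [card_product, ← une_rowSum_card, hM1.2]
    congr 1
    rw [← hM1.1 j, une_colSum_card]
    have h1 : (E.filter (fun p => p.2 = j)).card =
        (univ.filter (fun a => M a j = true ∧ (a, j) ∈ E)).card := by
      apply card_bij (fun p _ => p.1)
      · rintro ⟨a, b⟩ hp
        simp only [mem_filter] at hp
        obtain ⟨hp, rfl⟩ := hp
        simp [hp, hM2 _ hp]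
      · rintro ⟨a, b⟩ hp ⟨a', b'⟩ hp' h
        simp only [mem_filter] at hp hp'
        obtain ⟨hp, rfl⟩ := hp
        obtain ⟨hp', rfl⟩ := hp'
        simp at h; simp [h]
      · intro a ha
        simp only [mem_filter, mem_univ, true_and] at ha
        exact ⟨(a, j), by simp [ha.2], rfl⟩
    have h2 := card_filter_add_card_filter_not (s := univ.filter (fun a => M a j = true))
      (fun a => (a, j) ∈ E)
    rw [filter_filter, filter_filter] at h2
    omega
  have hle : Y.card ≤ Z.card := by
    apply card_le_card_of_injOn (fun q => ⟨uneSwitch i j q.2.1 q.2.2 q.1, q.2⟩)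
    · rintro ⟨M, a, b⟩ hq
      simp only [Y, Z, hA, hX, coe_sigma, Set.mem_sigma_iff, coe_filter, mem_coe, mem_filter,
        mem_univ, true_and, Set.mem_ofPred_eq, mem_product] at hq ⊢
      obtain ⟨⟨hMG, hME, hij⟩, hab, habE, hib, haj⟩ := hq
      have hai : a ≠ i := by rintro rfl; simp_all
      have hbj : b ≠ j := by rintro rfl; simp_all
      refine ⟨⟨?_, ?_⟩, ⟨?_, ?_⟩, ?_⟩
      · rw [hG]
        have := (hG M).1 hMG
        exact ⟨fun y => by rw [uneSwitch_colSum i j a b M hij hab hib haj, this.1],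
          fun y => by rw [uneSwitch_rowSum i j a b M hij hab hib haj, this.2]⟩
      · rintro ⟨x, y⟩ hp
        have h1 := hME _ hp
        have h2 := hE _ hp
        simp only at h1 h2
        unfold uneSwitch
        rw [if_neg]
        · exact h1
        · rintro ⟨h3 | h3, h4⟩
          · exact h2 h3
          · subst h3
            rcases h4 with rfl | rfl
            · simp_all
            · exact habE hp
      · simp [uneSwitch, haj]
      · intro h
        have := hME _ h
        simp_all
      · simp [uneSwitch, hib]
    · rintro ⟨M, a, b⟩ hq ⟨M', a', b'⟩ hq' h
      simp only [Sigma.mk.injEq, heq_eq_eq, Prod.mk.injEq] at h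
      obtain ⟨h, rfl, rfl⟩ := h
      have := congrArg (uneSwitch i j a b) h
      rw [uneSwitch_invol, uneSwitch_invol] at this
      rw [this]
  rw [← hZ]
  exact hY.trans hle

open Finset in
lemma une_iterate {m : ℕ} (ds ds' : Fin m → ℕ) (G : Finset (Fin m → Fin m → Bool))
    (hG : ∀ M, M ∈ G ↔ ((∀ j, colSum M j = ds j) ∧ ∀ i, rowSum M i = ds' i))
    (D F : ℕ) (hD : ∀ i, ds i ≤ D) (hD' : ∀ i, ds' i ≤ D) (S : Finset (Fin m))
    (R : Finset (Fin m)) :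
    ∀ E : Finset (Fin m × Fin m), (∀ p ∈ E, p.1 ∉ R) → (∀ p ∈ E, p.2 ∈ S) →
    F + (E.card + R.card) + 2 * (D * D) ≤ ∑ i, ds i →
    (∑ M ∈ G.filter (fun M => ∀ p ∈ E, M p.1 p.2 = true),
        ∏ i ∈ R, (S.filter (fun j => M i j = true)).card) * F ^ R.card ≤
      (G.filter (fun M => ∀ p ∈ E, M p.1 p.2 = true)).card *
        ((∏ i ∈ R, ds' i) * ((∑ j ∈ S, ds j) - E.card).descFactorial R.card) := by
  classical
  induction R using Finset.induction_on with
  | empty => intro E _ _ _; simp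
  | insert i R hiR ih =>
    intro E hE hES hF
    rw [card_insert_of_notMem hiR] at hF ⊢
    set X := G.filter (fun M => ∀ p ∈ E, M p.1 p.2 = true) with hX
    have hEi : ∀ p ∈ E, p.1 ≠ i := fun p hp h => hE p hp (by simp [h])
    have hij : ∀ j, (i, j) ∉ E := fun j h => hEi _ h rfl
    have hcard : ∀ j, (insert (i, j) E).card = E.card + 1 := fun j =>
      card_insert_of_notMem (hij j)
    set T := ∑ j ∈ S, ds j with hT
    set K := (∏ i ∈ R, ds' i) * (T - (E.card + 1)).descFactorial R.card with hK
    have hAj : ∀ j, G.filter (fun M => ∀ p ∈ insert (i, j) E, M p.1 p.2 = true) =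
        G.filter (fun M => (∀ p ∈ E, M p.1 p.2 = true) ∧ M i j = true) := by
      intro j
      apply filter_congr
      intro M _
      simp [and_comm]
    have step1 : (∑ M ∈ X, ∏ i' ∈ insert i R, (S.filter (fun j => M i' j = true)).card) =
        ∑ j ∈ S, ∑ M ∈ G.filter (fun M => ∀ p ∈ insert (i, j) E, M p.1 p.2 = true),
          ∏ i' ∈ R, (S.filter (fun j => M i' j = true)).card := by
      have h1 : ∀ j, G.filter (fun M => ∀ p ∈ insert (i, j) E, M p.1 p.2 = true) =
          X.filter (fun M => M i j = true) := by
        intro j; rw [hAj, hX, filter_filter]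
      simp_rw [h1, sum_filter]
      rw [sum_comm]
      apply sum_congr rfl
      intro M _
      rw [prod_insert hiR, card_filter, sum_mul]
      apply sum_congr rfl
      intro j _
      split_ifs <;> simp
    have step2 : ∀ j ∈ S,
        (∑ M ∈ G.filter (fun M => ∀ p ∈ insert (i, j) E, M p.1 p.2 = true),
          ∏ i' ∈ R, (S.filter (fun j => M i' j = true)).card) * F ^ (R.card + 1) ≤
        X.card * ((ds j - (E.filter (fun p => p.2 = j)).card) * ds' i) * K := by
      intro j hj
      have h1 := ih (insert (i, j) E) (by
          intro p hp
          rcases mem_insert.1 hp with rfl | hp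
          · exact hiR
          · exact fun h => hE p hp (mem_insert_of_mem h)) (by
          intro p hp
          rcases mem_insert.1 hp with rfl | hp
          · exact hj
          · exact hES p hp) (by rw [hcard]; omega)
      have h2 := une_switching ds ds' G hG E i j hEi D F hD hD' (by omega)
      rw [hcard] at h1
      rw [pow_succ, ← mul_assoc]
      refine (Nat.mul_le_mul_right F h1).trans ?_
      rw [hAj, mul_right_comm]
      exact Nat.mul_le_mul_right _ h2
    rw [step1, sum_mul]
    refine (sum_le_sum step2).trans ?_
    rw [← sum_mul, ← mul_sum, ← sum_mul]
    rcases X.eq_empty_or_nonempty with hXe | ⟨M, hM⟩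
    · rw [hXe]; simp
    have hM1 := (hG M).1 (mem_filter.1 hM).1
    have hM2 := (mem_filter.1 hM).2
    have hle : ∀ j, (E.filter (fun p => p.2 = j)).card ≤ ds j := by
      intro j
      rw [← hM1.1 j, une_colSum_card]
      apply card_le_card_of_injOn (fun p => p.1)
      · rintro ⟨a, b⟩ hp
        simp only [coe_filter, Set.mem_ofPred_eq] at hp
        obtain ⟨hp, rfl⟩ := hp
        simpa using hM2 _ hp
      · rintro ⟨a, b⟩ hp ⟨a', b'⟩ hp' h
        simp only [coe_filter, Set.mem_ofPred_eq] at hp hp'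
        obtain ⟨hp, rfl⟩ := hp
        obtain ⟨hp', rfl⟩ := hp'
        simp at h; simp [h]
    have hsumE : ∑ j ∈ S, (E.filter (fun p => p.2 = j)).card = E.card :=
      (card_eq_sum_card_fiberwise (fun p hp => hES p hp)).symm
    have hsum : ∑ j ∈ S, (ds j - (E.filter (fun p => p.2 = j)).card) = T - E.card := by
      rw [sum_tsub_distrib _ (fun j _ => hle j), hsumE]
    rw [hsum, prod_insert hiR, hK]
    have hdf : (T - E.card).descFactorial (R.card + 1) =
        (T - E.card) * (T - (E.card + 1)).descFactorial R.card := by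
      rcases Nat.eq_zero_or_pos (T - E.card) with h0 | h0
      · rw [h0]; simp
      · obtain ⟨q, hq⟩ := Nat.exists_eq_succ_of_ne_zero h0.ne'
        have : T - (E.card + 1) = q := by omega
        rw [this, hq, Nat.succ_descFactorial_succ]
    rw [hdf]
    apply le_of_eq
    ring

lemma une_choose_bound (T j : ℕ) (y : ℝ) (hy : 0 < y) :
    (T.choose j : ℝ) * y ^ j ≤ Real.exp (y * T) := by
  have h1 : (T.choose j : ℝ) * y ^ j ≤ (y + 1) ^ T := by
    rcases le_or_gt j T with h | h
    · rw [add_pow]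
      have := Finset.single_le_sum (f := fun i => y ^ i * 1 ^ (T - i) * (T.choose i : ℝ))
        (s := Finset.range (T + 1)) (fun i _ => by positivity) (Finset.mem_range.2 (by omega : j < T + 1))
      simp only [one_pow, mul_one] at this ⊢
      linarith
    · rw [Nat.choose_eq_zero_of_lt h]; simp; positivity
  refine h1.trans ?_
  rw [mul_comm, Real.exp_nat_mul]
  exact pow_le_pow_left₀ (by positivity) (Real.add_one_le_exp y) T

open Finset in
lemma une_esymm {ι : Type*} [DecidableEq ι] (w : ι → ℝ) (hw : ∀ i, 0 ≤ w i) (s : Finset ι) :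
    ∀ r : ℕ, (∑ R ∈ s.powersetCard r, ∏ i ∈ R, w i) * (r.factorial : ℝ) ≤ (∑ i ∈ s, w i) ^ r := by
  induction s using Finset.induction_on with
  | empty =>
    intro r
    cases r with
    | zero => simp
    | succ r =>
      rw [powersetCard_eq_empty.2 (by simp)]; simp
  | insert a s ha ih =>
    intro r
    cases r with
    | zero => simp
    | succ r =>
      rw [powersetCard_succ_insert ha, sum_union, sum_image, sum_insert ha]
      · have h1 : ∀ R ∈ s.powersetCard r, ∏ i ∈ insert a R, w i = w a * ∏ i ∈ R, w i := by
          intro R hR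
          rw [prod_insert]
          exact fun h => ha ((mem_powersetCard.1 hR).1 h)
        rw [sum_congr rfl h1, ← mul_sum]
        have i1 := ih (r + 1)
        have i2 := ih r
        set W := ∑ i ∈ s, w i
        have hW : 0 ≤ W := sum_nonneg (fun i _ => hw i)
        have ha0 := hw a
        have key : W ^ (r + 1) + (r + 1) * (w a * W ^ r) ≤ (w a + W) ^ (r + 1) := by
          have := pow_add_mul_le_add_pow (a := W) (b := w a) hW (by linarith) (r + 1)
          push_cast at this
          rw [add_comm (w a) W]
          linarith
        have : ((r + 1).factorial : ℝ) = (r + 1) * (r.factorial : ℝ) := by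
          push_cast [Nat.factorial_succ]; ring
        rw [add_mul]
        refine le_trans (add_le_add i1 ?_) key
        rw [this]
        have h3 := mul_le_mul_of_nonneg_left i2 (mul_nonneg (by positivity : (0:ℝ) ≤ r + 1) ha0)
        nlinarith [h3]
      · intro R hR R' hR' h
        have e1 : a ∉ R := fun h => ha ((mem_powersetCard.1 hR).1 h)
        have e2 : a ∉ R' := fun h => ha ((mem_powersetCard.1 hR').1 h)
        rw [← erase_insert e1, ← erase_insert e2, h]
      · rw [disjoint_left]
        intro R hR hR'
        obtain ⟨Q, hQ, rfl⟩ := mem_image.1 hR'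
        exact ha ((mem_powersetCard.1 hR).1 (mem_insert_self a Q))

open Finset in
lemma une_middle {m : ℕ} (ds ds' : Fin m → ℕ) (G : Finset (Fin m → Fin m → Bool))
    (hG : ∀ M, M ∈ G ↔ ((∀ j, colSum M j = ds j) ∧ ∀ i, rowSum M i = ds' i))
    (D F : ℕ) (hD : ∀ i, ds i ≤ D) (hD' : ∀ i, ds' i ≤ D)
    (r s : ℕ) (hF : F + r + 2 * (D * D) ≤ ∑ i, ds i)
    (d P B : ℝ) (hd : 1 ≤ d) (hP : 0 ≤ P) (hB : 0 ≤ B)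
    (SS : Finset (Finset (Fin m)))
    (hSc : ∀ S ∈ SS, S.card = r + s)
    (hSP : ∀ S ∈ SS, d ^ ((∑ i ∈ S, ds i : ℕ) : ℝ) ≤ P)
    (hSB : ∀ S ∈ SS, ((∑ i ∈ S, ds i).choose r : ℝ) ≤ B) :
    (∑ M ∈ G, ((SS.filter (fun S => r ≤ (S.filter (fun i =>
        (S.filter (fun j => M i j = true)).Nonempty)).card)).card : ℝ)) * (F : ℝ) ^ r ≤
      G.card * (B * P * (∑ i, d ^ (-(ds i : ℝ)) * (ds' i : ℝ)) ^ r * (m.choose s : ℝ)) := by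
  classical
  set w : Fin m → ℝ := fun i => d ^ (-(ds i : ℝ)) * (ds' i : ℝ) with hw
  have hd0 : 0 < d := by linarith
  have hw0 : ∀ i, 0 ≤ w i := fun i => by simp only [hw]; positivity
  have hswap : (∑ M ∈ G, ((SS.filter (fun S => r ≤ (S.filter (fun i =>
        (S.filter (fun j => M i j = true)).Nonempty)).card)).card : ℝ)) =
      ∑ S ∈ SS, ((G.filter (fun M => r ≤ (S.filter (fun i =>
        (S.filter (fun j => M i j = true)).Nonempty)).card)).card : ℝ) := by
    simp_rw [card_filter _ SS, card_filter _ G]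
    push_cast
    rw [sum_comm]
  have hone : ∀ S : Finset (Fin m), (G.filter (fun M => r ≤ (S.filter (fun i =>
        (S.filter (fun j => M i j = true)).Nonempty)).card)).card ≤
      ∑ R ∈ S.powersetCard r, ∑ M ∈ G, ∏ i ∈ R, (S.filter (fun j => M i j = true)).card := by
    intro S
    rw [card_filter, sum_comm]
    apply sum_le_sum
    intro M _
    split_ifs with h
    · obtain ⟨R, hR, hRc⟩ := exists_subset_card_eq h
      have hmem : R ∈ S.powersetCard r := mem_powersetCard.2 ⟨hR.trans (filter_subset _ _), hRc⟩
      refine le_trans ?_ (single_le_sum (f := fun R => ∏ i ∈ R, (S.filter (fun j => M i j = true)).card)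
        (fun _ _ => Nat.zero_le _) hmem)
      apply Nat.succ_le_of_lt
      apply prod_pos
      intro i hi
      exact card_pos.2 (mem_filter.1 (hR hi)).2
    · exact Nat.zero_le _
  have hR1 : ∀ S : Finset (Fin m), ∀ R ∈ S.powersetCard r,
      (∑ M ∈ G, ∏ i ∈ R, (S.filter (fun j => M i j = true)).card) * F ^ r ≤
        G.card * ((∏ i ∈ R, ds' i) * (r.factorial * (∑ j ∈ S, ds j).choose r)) := by
    intro S R hR
    have hc := (mem_powersetCard.1 hR).2
    have := une_iterate ds ds' G hG D F hD hD' S R ∅ (by simp) (by simp) (by simp [hc]; omega)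
    simpa [hc, Nat.descFactorial_eq_factorial_mul_choose] using this
  have hprod : ∀ S ∈ SS, ∀ R ∈ S.powersetCard r, (∏ i ∈ R, (ds' i : ℝ)) ≤ P * ∏ i ∈ R, w i := by
    intro S hS R hR
    have hsub := (mem_powersetCard.1 hR).1
    have h1 : 1 ≤ P * ∏ i ∈ R, d ^ (-(ds i : ℝ)) := by
      have h2 : ∏ i ∈ S, d ^ (-(ds i : ℝ)) ≤ ∏ i ∈ R, d ^ (-(ds i : ℝ)) := by
        apply prod_le_prod_of_subset_of_le_one hsub
        · intro i _; positivity
        · intro i _ _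
          exact Real.rpow_le_one_of_one_le_of_nonpos hd (by simp)
      have h3 : ∏ i ∈ S, d ^ (-(ds i : ℝ)) = (d ^ ((∑ i ∈ S, ds i : ℕ) : ℝ))⁻¹ := by
        rw [← Real.rpow_neg hd0.le]
        rw [← Real.rpow_sum_of_pos hd0]
        push_cast
        rw [sum_neg_distrib]
      have h4 := hSP S hS
      have h5 : 0 < d ^ ((∑ i ∈ S, ds i : ℕ) : ℝ) := by positivity
      calc (1:ℝ) = d ^ ((∑ i ∈ S, ds i : ℕ) : ℝ) * (d ^ ((∑ i ∈ S, ds i : ℕ) : ℝ))⁻¹ := by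
            field_simp
        _ ≤ P * ∏ i ∈ R, d ^ (-(ds i : ℝ)) := by
            apply mul_le_mul h4 (h3 ▸ h2) (by positivity) hP
    simp only [hw]
    rw [prod_mul_distrib, ← mul_assoc]
    exact le_mul_of_one_le_left (by positivity) h1
  have hS1 : ∀ S ∈ SS, ((G.filter (fun M => r ≤ (S.filter (fun i =>
        (S.filter (fun j => M i j = true)).Nonempty)).card)).card : ℝ) * (F : ℝ) ^ r ≤
      G.card * (B * P * r.factorial) * ∑ R ∈ S.powersetCard r, ∏ i ∈ R, w i := by
    intro S hS
    have h1 : ((G.filter (fun M => r ≤ (S.filter (fun i =>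
        (S.filter (fun j => M i j = true)).Nonempty)).card)).card) * F ^ r ≤
        ∑ R ∈ S.powersetCard r, G.card * ((∏ i ∈ R, ds' i) * (r.factorial * (∑ j ∈ S, ds j).choose r)) := by
      refine (Nat.mul_le_mul_right _ (hone S)).trans ?_
      rw [sum_mul]
      exact sum_le_sum (hR1 S)
    have h2 : ((G.filter (fun M => r ≤ (S.filter (fun i =>
        (S.filter (fun j => M i j = true)).Nonempty)).card)).card : ℝ) * (F : ℝ) ^ r ≤
        ∑ R ∈ S.powersetCard r, (G.card : ℝ) * ((∏ i ∈ R, (ds' i : ℝ)) *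
          (r.factorial * ((∑ j ∈ S, ds j).choose r : ℝ))) := by
      exact_mod_cast h1
    refine h2.trans ?_
    rw [mul_sum]
    apply sum_le_sum
    intro R hR
    calc (G.card : ℝ) * ((∏ i ∈ R, (ds' i : ℝ)) *
          (r.factorial * ((∑ j ∈ S, ds j).choose r : ℝ)))
        ≤ (G.card : ℝ) * ((P * ∏ i ∈ R, w i) * (r.factorial * B)) := by
          have := prod_nonneg (s := R) (fun i _ => hw0 i)
          gcongr
          · exact hprod S hS R hR
          · exact hSB S hS
      _ = _ := by ring
  have hcount : ∑ S ∈ SS, ∑ R ∈ S.powersetCard r, ∏ i ∈ R, w i ≤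
      (m.choose s : ℝ) * ∑ R ∈ (univ : Finset (Fin m)).powersetCard r, ∏ i ∈ R, w i := by
    rw [sum_comm' (t' := (univ : Finset (Fin m)).powersetCard r)
      (s' := fun R => SS.filter (fun S => R ⊆ S))]
    · rw [mul_sum]
      apply sum_le_sum
      intro R hR
      rw [sum_const, nsmul_eq_mul]
      apply mul_le_mul_of_nonneg_right _ (prod_nonneg (fun i _ => hw0 i))
      have : (SS.filter (fun S => R ⊆ S)).card ≤ ((univ : Finset (Fin m)).powersetCard s).card := by
        apply card_le_card_of_injOn (fun S => S \ R)
        · intro S hS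
          simp only [coe_filter, Set.mem_ofPred_eq] at hS
          simp only [mem_coe, mem_powersetCard, subset_univ, true_and]
          rw [card_sdiff_of_subset hS.2, hSc S hS.1, (mem_powersetCard.1 hR).2]
          omega
        · intro S hS S' hS' h
          simp only [coe_filter, Set.mem_ofPred_eq] at hS hS'
          simp only at h
          rw [← sdiff_union_of_subset hS.2, ← sdiff_union_of_subset hS'.2, h]
      rw [card_powersetCard, card_univ, Fintype.card_fin] at this
      exact_mod_cast this
    · intro S R
      simp only [mem_powersetCard, mem_filter, subset_univ, true_and]
      tauto
  rw [hswap, sum_mul]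
  refine (sum_le_sum hS1).trans ?_
  rw [← mul_sum]
  have hes := une_esymm w hw0 univ r
  calc _ ≤ G.card * (B * P * r.factorial) * ((m.choose s : ℝ) *
        ∑ R ∈ (univ : Finset (Fin m)).powersetCard r, ∏ i ∈ R, w i) := by gcongr
    _ = G.card * (B * P * (m.choose s : ℝ)) *
        ((∑ R ∈ (univ : Finset (Fin m)).powersetCard r, ∏ i ∈ R, w i) * r.factorial) := by ring
    _ ≤ G.card * (B * P * (m.choose s : ℝ)) * (∑ i, w i) ^ r := by gcongr
    _ = _ := by ring

lemma une_denominator (δ C η c d N : ℝ) (m k D : ℕ) (hδ : 0 < δ) (hC : 0 < C)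
    (hη : 0 < η) (hη1 : η ≤ 1) (hc : 0 < c) (hc1 : c ≤ 1)
    (hcK : (2 + 2 * C ^ 2 * (1 / δ + 4) ^ 2) * Real.sqrt c ≤ η / 4)
    (hd : 1 ≤ d) (hdδ : d ≤ 1 / δ) (hm : 1 ≤ c * m) (hk : (k : ℝ) ≤ c * m)
    (hD : (D : ℝ) ≤ C * (d + Real.log m)) (hN : (1 - c) * (d * m) ≤ N) :
    (1 + c) * (d * m) ≤ Real.exp η * (N - k - 2 * (D * D)) ∧ 0 < N - k - 2 * (D * D) := by
  have hm0 : (0:ℝ) < m := by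
    by_contra h
    have : c * (m:ℝ) ≤ 0 := mul_nonpos_of_nonneg_of_nonpos hc.le (not_lt.1 h)
    linarith
  have hm1 : (1:ℝ) ≤ m := by nlinarith
  set K := 2 * C ^ 2 * (1 / δ + 4) ^ 2 with hK
  have hK0 : 0 ≤ K := by positivity
  set q := Real.sqrt c with hq
  have hq0 : 0 < q := Real.sqrt_pos.2 hc
  have hqq : q * q = c := Real.mul_self_sqrt hc.le
  have hq1 : q ≤ 1 := by rw [hq]; exact Real.sqrt_le_one.2 hc1
  have hcq : c ≤ q := by nlinarith
  set u := Real.sqrt (Real.sqrt m) with hu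
  have hv : Real.sqrt m * Real.sqrt m = m := Real.mul_self_sqrt hm0.le
  have huu : u * u = Real.sqrt m := Real.mul_self_sqrt (Real.sqrt_nonneg _)
  have hu1 : 1 ≤ u := by
    rw [hu]; exact Real.one_le_sqrt.2 (Real.one_le_sqrt.2 hm1)
  have hlog : Real.log m ≤ 4 * u := by
    have : (m:ℝ) = u ^ 4 := by
      calc (m:ℝ) = (u * u) * (u * u) := by rw [huu, hv]
        _ = u ^ 4 := by ring
    rw [this, Real.log_pow]
    have := Real.log_le_self (by linarith : 0 ≤ u)
    push_cast; linarith
  have hlog0 : 0 ≤ Real.log m := Real.log_nonneg hm1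
  have hδi : 0 < 1 / δ := by positivity
  have hDu : (D:ℝ) ≤ C * ((1 / δ + 4) * u) := by
    refine hD.trans (mul_le_mul_of_nonneg_left ?_ hC.le)
    nlinarith
  have hDD : 2 * ((D:ℝ) * D) ≤ K * (u * u) := by
    have := mul_self_le_mul_self (by positivity : (0:ℝ) ≤ D) hDu
    calc 2 * ((D:ℝ) * D) ≤ 2 * (C * ((1 / δ + 4) * u) * (C * ((1 / δ + 4) * u))) := by linarith
      _ = _ := by rw [hK]; ring
  have hqs : u * u ≤ q * m := by
    rw [huu]
    have h1 : 1 ≤ q * Real.sqrt m := by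
      rw [hq, ← Real.sqrt_mul hc.le]; exact Real.one_le_sqrt.2 hm
    calc Real.sqrt m = 1 * Real.sqrt m := by ring
      _ ≤ q * Real.sqrt m * Real.sqrt m := by gcongr
      _ = q * m := by rw [mul_assoc, hv]
  have hdm : (m:ℝ) ≤ d * m := by nlinarith
  have hlow : (1 - η / 4) * (d * m) ≤ N - k - 2 * (D * D) := by
    have h1 : 2 * ((D:ℝ) * D) ≤ K * q * (d * m) := by
      refine hDD.trans ?_
      calc K * (u * u) ≤ K * (q * (d * m)) := by
            apply mul_le_mul_of_nonneg_left _ hK0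
            exact hqs.trans (by gcongr)
        _ = _ := by ring
    have h2 : (k:ℝ) ≤ q * (d * m) := hk.trans (by gcongr)
    have h3 : c * (d * m) ≤ q * (d * m) := by gcongr
    have h4 : (2 + K) * q * (d * m) ≤ η / 4 * (d * m) := by gcongr
    linarith
  have hdm0 : 0 < d * m := by linarith
  constructor
  · have he := Real.add_one_le_exp η
    have hcη : c ≤ η / 4 := by
      have hKq : 0 ≤ K * q := mul_nonneg hK0 hq0.le
      have : (2 + K) * q = 2 * q + K * q := by ring
      linarith
    calc (1 + c) * (d * m) ≤ ((η + 1) * (1 - η / 4)) * (d * m) := by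
          gcongr
          nlinarith
      _ = (η + 1) * ((1 - η / 4) * (d * m)) := by ring
      _ ≤ Real.exp η * (N - k - 2 * (D * D)) := by
          apply mul_le_mul he hlow _ (by positivity)
          apply mul_nonneg <;> linarith
  · refine lt_of_lt_of_le ?_ hlow
    apply mul_pos <;> linarith

lemma une_numeric (δ g y θ d ε α L : ℝ) (hδ : 0 < δ) (hy : 0 < y) (hy1 : y ≤ 1) (hg : g = 8 * y)
    (hgd : Real.log d + 1 - d ≤ -g) (hd1 : 1 ≤ d) (hdδ : d ≤ 1 / δ)
    (hθ : θ * (2 / δ + 5 + 2 * Real.log (1 / y)) = y)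
    (hε0 : 0 ≤ ε) (hε : ε ≤ θ) (hα0 : 0 ≤ α) (hα : α ≤ θ) (hαL : α * L ≤ θ)
    (X : ℝ) (hX : X ≤ 1 + 3 * L) :
    (1 + ε) * Real.log d + (1 - α) * (1 - d + y) + α * (1 + X) + (2 * y + (ε + α) * Real.log (1 / y))
      ≤ -(g / 2) := by
  have hlogd : Real.log d ≤ 1 / δ := (Real.log_le_self (by linarith)).trans hdδ
  have hlogd0 : 0 ≤ Real.log d := Real.log_nonneg hd1
  have hly : 0 ≤ Real.log (1 / y) := Real.log_nonneg (by rw [le_div_iff₀ hy]; linarith)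
  have hδi : 0 < 1 / δ := by positivity
  have a1 : ε * Real.log d ≤ θ * (1 / δ) := by gcongr; linarith
  have a2 : α * (d - 1) ≤ θ * (1 / δ) := by
    apply mul_le_mul hα (by linarith) (by linarith) (by linarith)
  have a3 : α * X ≤ 4 * θ := by nlinarith
  have a4 : (ε + α) * Real.log (1 / y) ≤ 2 * θ * Real.log (1 / y) := by gcongr; linarith
  have a5 : 0 ≤ α * y := by positivity
  have e : θ * (2 / δ + 5 + 2 * Real.log (1 / y)) =
    2 * (θ * (1 / δ)) + 5 * θ + 2 * θ * Real.log (1 / y) := by ring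
  nlinarith

lemma une_rpow_choose (T r k : ℕ) (y ε α : ℝ) (hy : 0 < y) (hy1 : y ≤ 1)
    (hT : (T : ℝ) ≤ (1 + ε) * k) (hε : ε ≤ 1) (hr : (1 - α) * k ≤ r) :
    (T.choose r : ℝ) ≤ Real.exp (k * (2 * y + (ε + α) * Real.log (1 / y))) := by
  rcases lt_or_ge T r with h | h
  · rw [Nat.choose_eq_zero_of_lt h]; simp; positivity
  rw [← Nat.choose_symm h]
  have hb := une_choose_bound T (T - r) y hy
  have hyp : y ^ (T - r) = Real.exp (-((T - r : ℕ) * Real.log (1 / y))) := by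
    rw [one_div, Real.log_inv, mul_neg, neg_neg, Real.exp_nat_mul, Real.exp_log hy]
  rw [hyp] at hb
  have hly : 0 ≤ Real.log (1 / y) := Real.log_nonneg (by rw [le_div_iff₀ hy]; linarith)
  have hk0 : (0:ℝ) ≤ k := by positivity
  have h1 : (T.choose (T - r) : ℝ) ≤ Real.exp (y * T + ((T - r : ℕ) * Real.log (1 / y))) := by
    rw [Real.exp_add]
    rw [Real.exp_neg] at hb
    rwa [← div_eq_mul_inv, div_le_iff₀ (Real.exp_pos _)] at hb
  refine h1.trans (Real.exp_le_exp.2 ?_)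
  push_cast [Nat.cast_sub h]
  have h2 : (T:ℝ) - r ≤ (ε + α) * k := by linarith
  have h3 := mul_le_mul_of_nonneg_right h2 hly
  have h4 : y * T ≤ y * (2 * k) := by
    gcongr; nlinarith
  linarith

lemma une_choose_m (m s k : ℕ) (α : ℝ) (hα0 : 0 < α) (hα1 : α ≤ 1) (hk : 0 < k) (hkm : k ≤ m)
    (hs : (s : ℝ) ≤ α * k) :
    (m.choose s : ℝ) ≤ Real.exp (k * (α * (1 + Real.log (m / (α * k))))) := by
  have hk0 : (0:ℝ) < k := by exact_mod_cast hk
  have hkm' : (k:ℝ) ≤ m := by exact_mod_cast hkm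
  have hm0 : (0:ℝ) < m := by linarith
  set x := α * k / m with hx
  have hx0 : 0 < x := by positivity
  have hb := une_choose_bound m s x hx0
  have hxi : (m:ℝ) / (α * k) = x⁻¹ := by rw [hx, inv_div]
  have hx1 : x ≤ 1 := by rw [hx, div_le_one hm0]; nlinarith
  have hyp : x ^ s = Real.exp (-(s * Real.log (x⁻¹))) := by
    rw [Real.log_inv, mul_neg, neg_neg, Real.exp_nat_mul, Real.exp_log hx0]
  rw [hyp] at hb
  have h1 : (m.choose s : ℝ) ≤ Real.exp (x * m + (s * Real.log (x⁻¹))) := by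
    rw [Real.exp_add]
    rw [Real.exp_neg] at hb
    rwa [← div_eq_mul_inv, div_le_iff₀ (Real.exp_pos _)] at hb
  refine h1.trans (Real.exp_le_exp.2 ?_)
  have hly : 0 ≤ Real.log x⁻¹ := Real.log_nonneg ((one_le_inv₀ hx0).2 hx1)
  rw [hxi]
  have : x * m = α * k := by rw [hx]; field_simp
  rw [this]
  have := mul_le_mul_of_nonneg_right hs hly
  linarith

open Finset in
lemma une_rows {m : ℕ} (M : Fin m → Fin m → Bool) (S : Finset (Fin m)) (s : ℕ)
    (h : (uniqueNbrSetB M S).ncard ≤ s) :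
    S.card - s ≤ (S.filter (fun i => (S.filter (fun j => M i j = true)).Nonempty)).card := by
  classical
  have h1 : (S.filter (fun i => ¬ (S.filter (fun j => M i j = true)).Nonempty)).card ≤ s := by
    refine le_trans ?_ h
    rw [← Set.ncard_coe_finset]
    apply Set.ncard_le_ncard _ (Set.toFinite _)
    intro i hi
    simp only [coe_filter, Set.mem_ofPred_eq, not_nonempty_iff_eq_empty, filter_eq_empty_iff] at hi
    left
    exact ⟨hi.1, fun j hj => by simpa using hi.2 hj⟩
  have h2 := card_filter_add_card_filter_not (s := S)
    (fun i => (S.filter (fun j => M i j = true)).Nonempty)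
  omega

set_option maxHeartbeats 1000000 in
theorem unique_neighbour_expansion_config (δ C : ℝ) (hδ : 0 < δ) (hC : 0 < C) :
    ∃ c : ℝ, 0 < c ∧
      ∀ (d : ℝ) (n m : ℕ) (ds ds' : Fin m → ℕ),
        d ∈ Set.Icc (1 + δ) δ⁻¹ → 0 < n →
        DegRegular n m ds ds' d c C →
        ∀ G : Finset (Fin m → Fin m → Bool),
          (∀ M, M ∈ G ↔ ((∀ j, colSum M j = ds j) ∧ ∀ i, rowSum M i = ds' i)) →
          G.Nonempty →
          ∀ k : ℕ, (k : ℝ) ≤ c * m →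
            (G.card : ℝ)⁻¹ *
              ∑ M ∈ G, (({S : Finset (Fin m) | S.card = k ∧
                  |(∑ i ∈ S, (ds i : ℝ)) - k| ≤ k / Real.sqrt (Real.log ((m : ℝ) / k)) ∧
                  ((uniqueNbrSetB M S).ncard : ℝ) ≤ alphaFn n k * k}).ncard : ℝ)
              ≤ c⁻¹ * Real.exp (-(c * k)) := by
  classical
  set g : ℝ := min 1 (δ - Real.log (1 + δ)) with hg
  have hgpos : 0 < g := by
    have := Real.log_lt_sub_one_of_pos (by linarith : 0 < 1 + δ) (by linarith)
    rw [hg]; apply lt_min one_pos; linarith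
  have hg1 : g ≤ 1 := min_le_left _ _
  have hg2 : g ≤ δ - Real.log (1 + δ) := min_le_right _ _
  have hlδ : 0 ≤ Real.log (1 + δ) := Real.log_nonneg (by linarith)
  set y : ℝ := g / 8 with hy
  have hy0 : 0 < y := by positivity
  have hy1 : y ≤ 1 := by linarith
  have hly : 0 ≤ Real.log (1 / y) := Real.log_nonneg (by rw [le_div_iff₀ hy0]; linarith)
  have hQ : 5 ≤ 2 / δ + 5 + 2 * Real.log (1 / y) := by
    have : 0 < 2 / δ := by positivity
    linarith
  set Q := 2 / δ + 5 + 2 * Real.log (1 / y) with hQdef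
  set θ : ℝ := y / Q with hθ
  have hθ0 : 0 < θ := by positivity
  have hθ1 : θ ≤ 1 := by rw [hθ, div_le_one (by linarith)]; linarith
  have hθQ : θ * Q = y := by rw [hθ]; field_simp
  set K := 2 * C ^ 2 * (1 / δ + 4) ^ 2 with hK
  have hK0 : 0 ≤ K := by positivity
  set c : ℝ := min (Real.exp (-(1 / θ ^ 2)) / 2) (min ((y / (4 * (2 + K))) ^ 2) (g / 2)) with hc
  have hc0 : 0 < c := by rw [hc]; positivity
  have hcA : c ≤ Real.exp (-(1 / θ ^ 2)) / 2 := min_le_left _ _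
  have hcB : c ≤ (y / (4 * (2 + K))) ^ 2 := (min_le_right _ _).trans (min_le_left _ _)
  have hcC : c ≤ g / 2 := (min_le_right _ _).trans (min_le_right _ _)
  have hc2 : c ≤ 1 / 2 := by linarith
  have hcK : (2 + K) * Real.sqrt c ≤ y / 4 := by
    have : Real.sqrt c ≤ y / (4 * (2 + K)) := Real.sqrt_le_iff.2 ⟨by positivity, hcB⟩
    calc (2 + K) * Real.sqrt c ≤ (2 + K) * (y / (4 * (2 + K))) := by gcongr
      _ = y / 4 := by field_simp
  refine ⟨c, hc0, ?_⟩
  clear_value c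
  rintro d n m ds ds' ⟨hd1, hd2⟩ hn ⟨⟨hmn1, hmn2⟩, hsing, ⟨hN1, -⟩, -, ⟨-, hA⟩⟩ G hG hGne k hk
  have hGc : (0:ℝ) < G.card := by exact_mod_cast hGne.card_pos
  have hcinv : 1 ≤ c⁻¹ := (one_le_inv₀ hc0).2 (by linarith)
  rcases Nat.eq_zero_or_pos k with hk0 | hkpos
  · subst hk0
    have hle : ∀ M ∈ G, (({S : Finset (Fin m) | S.card = 0 ∧
                  |(∑ i ∈ S, (ds i : ℝ)) - (0:ℕ)| ≤ (0:ℕ) / Real.sqrt (Real.log ((m : ℝ) / (0:ℕ))) ∧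
                  ((uniqueNbrSetB M S).ncard : ℝ) ≤ alphaFn n (0:ℕ) * (0:ℕ)}).ncard : ℝ) ≤ 1 := by
      intro M _
      have : ({S : Finset (Fin m) | S.card = 0 ∧
                  |(∑ i ∈ S, (ds i : ℝ)) - (0:ℕ)| ≤ (0:ℕ) / Real.sqrt (Real.log ((m : ℝ) / (0:ℕ))) ∧
                  ((uniqueNbrSetB M S).ncard : ℝ) ≤ alphaFn n (0:ℕ) * (0:ℕ)}).ncard ≤
            ({∅} : Set (Finset (Fin m))).ncard := by
        apply Set.ncard_le_ncard _ (Set.toFinite _)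
        rintro S ⟨hS, -⟩
        exact Finset.card_eq_zero.1 hS
      rw [Set.ncard_singleton] at this
      exact_mod_cast this
    have h1 := Finset.sum_le_card_nsmul _ _ _ hle
    rw [nsmul_eq_mul, mul_one] at h1
    calc _ ≤ (G.card : ℝ)⁻¹ * G.card := by gcongr
      _ = 1 := by field_simp
      _ ≤ c⁻¹ * Real.exp (-(c * (0:ℕ))) := by simpa using hcinv
  -- now `k ≥ 1`
  have hk1 : (1:ℝ) ≤ k := by exact_mod_cast hkpos
  have hkr : (0:ℝ) < k := by linarith
  have hcm : 1 ≤ c * m := hk1.trans hk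
  have hm0 : (0:ℝ) < m := by
    by_contra h
    have : c * (m:ℝ) ≤ 0 := mul_nonpos_of_nonneg_of_nonpos hc0.le (not_lt.1 h)
    linarith
  have hkm : k ≤ m := by
    have : (k:ℝ) ≤ m := hk.trans (mul_le_of_le_one_left hm0.le (by linarith))
    exact_mod_cast this
  have hnr : (0:ℝ) < n := by exact_mod_cast hn
  have hd1' : 1 ≤ d := by linarith
  have hd0 : 0 < d := by linarith
  have hdδ : d ≤ 1 / δ := by rwa [one_div]
  have hgd : Real.log d + 1 - d ≤ -g := by
    have h1 : Real.log (d / (1 + δ)) ≤ d / (1 + δ) - 1 := Real.log_le_sub_one_of_pos (by positivity)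
    rw [Real.log_div (by positivity) (by positivity)] at h1
    have h2 : d / (1 + δ) - 1 ≤ d - (1 + δ) := by
      have : d / (1 + δ) - 1 = (d - (1 + δ)) / (1 + δ) := by field_simp
      rw [this]
      exact div_le_self (by linarith) (by linarith)
    linarith
  -- the logarithms
  have hexp2 : 2 * c * Real.exp (1 / θ ^ 2) ≤ 1 := by
    rw [Real.exp_neg] at hcA
    have := Real.exp_pos (1 / θ ^ 2)
    calc 2 * c * Real.exp (1 / θ ^ 2) ≤ 2 * ((Real.exp (1 / θ ^ 2))⁻¹ / 2) * Real.exp (1 / θ ^ 2) := by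
          gcongr
      _ = 1 := by field_simp
  have hmk2 : 2 * Real.exp (1 / θ ^ 2) ≤ m / k := by
    rw [le_div_iff₀ hkr]
    have := Real.exp_pos (1 / θ ^ 2)
    calc 2 * Real.exp (1 / θ ^ 2) * k ≤ 2 * Real.exp (1 / θ ^ 2) * (c * m) := by gcongr
      _ = (2 * c * Real.exp (1 / θ ^ 2)) * m := by ring
      _ ≤ 1 * m := by gcongr
      _ = m := one_mul _
  have hm2n : (m:ℝ) ≤ 2 * n := by
    rw [div_le_iff₀ hnr] at hmn2
    exact hmn2.trans (mul_le_mul_of_nonneg_right (by linarith) hnr.le)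
  have hnk2 : Real.exp (1 / θ ^ 2) ≤ n / k := by
    have : (m:ℝ) / k ≤ 2 * (n / k) := by
      rw [← mul_div_assoc]; gcongr
    linarith
  have hΛ : 1 / θ ^ 2 ≤ Real.log ((m:ℝ) / k) := by
    rw [Real.le_log_iff_exp_le (by positivity)]
    have := Real.exp_pos (1 / θ ^ 2)
    linarith
  set L := Real.log ((n:ℝ) / k) with hL
  have hL1 : 1 / θ ^ 2 ≤ L := by
    rw [hL, Real.le_log_iff_exp_le (by positivity)]
    exact hnk2
  have hθ2 : 1 / θ ≤ 1 / θ ^ 2 := by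
    apply one_div_le_one_div_of_le (by positivity)
    rw [pow_two]; exact mul_le_of_le_one_left hθ0.le hθ1
  have hθ3 : 1 ≤ 1 / θ := by rw [le_div_iff₀ hθ0]; linarith
  have hL2 : 1 / θ ≤ L := hθ2.trans hL1
  have hLone : 1 ≤ L := hθ3.trans hL2
  have hLpos : 0 < L := by linarith
  have hLinv : 1 / L ≤ θ := by
    rw [div_le_iff₀ hLpos]
    rw [div_le_iff₀ hθ0] at hL2
    linarith
  set ε : ℝ := 1 / Real.sqrt (Real.log ((m : ℝ) / k)) with hε
  have hε0 : 0 ≤ ε := by positivity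
  have hεθ : ε ≤ θ := by
    have h1 : 1 / θ ≤ Real.sqrt (Real.log ((m : ℝ) / k)) := by
      apply Real.le_sqrt_of_sq_le
      rw [div_pow, one_pow]; exact hΛ
    rw [hε, div_le_iff₀ (lt_of_lt_of_le (by positivity) h1)]
    rw [div_le_iff₀ hθ0] at h1
    linarith
  set α : ℝ := alphaFn n k with hα
  have hαe : α = (1 / L) * (1 / L) := by
    rw [hα, alphaFn, ← hL]; field_simp
  have hα0 : 0 < α := by rw [hαe]; positivity
  have hLi1 : 1 / L ≤ 1 := hLinv.trans hθ1
  have hαθ : α ≤ θ := by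
    rw [hαe]
    have : 0 < 1 / L := by positivity
    exact (mul_le_of_le_one_left this.le hLi1).trans hLinv
  have hα1 : α ≤ 1 := hαθ.trans hθ1
  have hαL : α * L ≤ θ := by
    have : α * L = 1 / L := by rw [hαe]; field_simp
    rw [this]; exact hLinv
  have hX : Real.log (m / (α * k)) ≤ 1 + 3 * L := by
    have e1 : (m:ℝ) / (α * k) = (m / n) * ((n / k) * (L * L)) := by
      rw [hαe]; field_simp
    rw [e1, Real.log_mul (by positivity) (by positivity), Real.log_mul (by positivity) (by positivity),
      Real.log_mul (by positivity) (by positivity), ← hL]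
    have h1 : Real.log ((m:ℝ) / n) ≤ m / n - 1 := Real.log_le_sub_one_of_pos (by positivity)
    have h2 : Real.log L ≤ L := Real.log_le_self hLpos.le
    linarith
  -- parameters of the counting argument
  set s : ℕ := ⌊α * k⌋₊ with hs
  have hsα : (s:ℝ) ≤ α * k := Nat.floor_le (by positivity)
  have hsk : s ≤ k := by
    have : (s:ℝ) ≤ k := hsα.trans (mul_le_of_le_one_left hkr.le hα1)
    exact_mod_cast this
  set r : ℕ := k - s with hr
  have hrk : (r:ℝ) = k - s := by rw [hr, Nat.cast_sub hsk]
  have hrα : (1 - α) * k ≤ r := by rw [hrk]; linarith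
  have hrle : r ≤ k := Nat.sub_le _ _
  set D : ℕ := ⌊C * (d + Real.log m)⌋₊ with hDdef
  have hm1 : (1:ℝ) ≤ m := hk1.trans (by exact_mod_cast hkm)
  have hlogm : 0 ≤ Real.log m := Real.log_nonneg hm1
  have hDr : (D:ℝ) ≤ C * (d + Real.log m) := Nat.floor_le (by positivity)
  have hdeg : ∀ i, ds i + ds' i ≤ D := by
    intro i
    have := hsing {i} (Finset.singleton_nonempty i)
    simp only [Finset.sum_singleton, Finset.card_singleton, Nat.cast_one, div_one, mul_one] at this
    apply Nat.le_floor
    push_cast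
    exact this
  set N : ℕ := ∑ i, ds i with hN
  have hNr : (N:ℝ) = ∑ i, (ds i : ℝ) := by rw [hN]; push_cast; rfl
  obtain ⟨hden, hdenpos⟩ := une_denominator δ C y c d N m k D hδ hC hy0 hy1 hc0 (by linarith)
    hcK hd1' hdδ hcm hk hDr (by rw [hNr]; exact hN1)
  have hNle : k + 2 * (D * D) ≤ N := by
    have : ((k + 2 * (D * D) : ℕ) : ℝ) ≤ N := by push_cast; linarith
    exact_mod_cast this
  set F : ℕ := N - (k + 2 * (D * D)) with hF
  have hFr : (F:ℝ) = N - k - 2 * (D * D) := by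
    rw [hF, Nat.cast_sub hNle]; push_cast; ring
  rw [← hFr] at hden hdenpos
  set A : ℝ := ∑ i, d ^ (-(ds i : ℝ)) * (ds' i : ℝ) with hAdef
  have hA0 : 0 ≤ A := Finset.sum_nonneg (fun i _ => by positivity)
  have hAF : A ≤ Real.exp (1 - d + y) * F := by
    refine hA.trans ?_
    have e1 : Real.exp (1 - d + y) = Real.exp 1 * Real.exp (-d) * Real.exp y := by
      rw [← Real.exp_add, ← Real.exp_add]; ring_nf
    rw [e1]
    calc (1 + c) * (Real.exp 1 * d * Real.exp (-d) * m)
        = Real.exp 1 * Real.exp (-d) * ((1 + c) * (d * m)) := by ring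
      _ ≤ Real.exp 1 * Real.exp (-d) * (Real.exp y * F) := by gcongr
      _ = _ := by ring
  set P : ℝ := Real.exp (k * ((1 + ε) * Real.log d)) with hP
  set B : ℝ := Real.exp (k * (2 * y + (ε + α) * Real.log (1 / y))) with hB
  set SS : Finset (Finset (Fin m)) := Finset.univ.filter (fun S : Finset (Fin m) =>
    S.card = k ∧ ((∑ i ∈ S, ds i : ℕ) : ℝ) ≤ (1 + ε) * k) with hSS
  have hlogd0 : 0 ≤ Real.log d := Real.log_nonneg hd1'
  have hmid := une_middle ds ds' G hG D F (fun i => by have := hdeg i; omega)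
    (fun i => by have := hdeg i; omega) r s (by omega) d P B hd1' (Real.exp_pos _).le
    (Real.exp_pos _).le SS
    (by intro S hS; have := (Finset.mem_filter.1 hS).2.1; omega)
    (by
      intro S hS
      have := (Finset.mem_filter.1 hS).2.2
      rw [Real.rpow_def_of_pos hd0, hP]
      apply Real.exp_le_exp.2
      have := mul_le_mul_of_nonneg_left this hlogd0
      linarith)
    (by
      intro S hS
      exact une_rpow_choose _ r k y ε α hy0 hy1 (Finset.mem_filter.1 hS).2.2 (hεθ.trans hθ1) hrα)
  have hset : ∀ M ∈ G, (({S : Finset (Fin m) | S.card = k ∧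
                  |(∑ i ∈ S, (ds i : ℝ)) - k| ≤ k / Real.sqrt (Real.log ((m : ℝ) / k)) ∧
                  ((uniqueNbrSetB M S).ncard : ℝ) ≤ α * k}).ncard : ℝ) ≤
      ((SS.filter (fun S => r ≤ (S.filter (fun i =>
        (S.filter (fun j => M i j = true)).Nonempty)).card)).card : ℝ) := by
    intro M _
    rw [← Set.ncard_coe_finset]
    rw [Nat.cast_le]
    apply Set.ncard_le_ncard _ (Set.toFinite _)
    rintro S ⟨hS1, hS2, hS3⟩
    simp only [hSS, Finset.mem_coe, Finset.mem_filter, Finset.mem_univ, true_and]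
    refine ⟨⟨hS1, ?_⟩, ?_⟩
    · have h1 := (abs_le.1 hS2).2
      have h2 : (k:ℝ) / Real.sqrt (Real.log ((m : ℝ) / k)) = ε * k := by rw [hε]; ring
      rw [h2] at h1
      push_cast
      linarith
    · have h1 : (uniqueNbrSetB M S).ncard ≤ s := Nat.le_floor hS3
      have := une_rows M S s h1
      rwa [hS1] at this
  have hsum := Finset.sum_le_sum hset
  set Tot := ∑ M ∈ G, ((SS.filter (fun S => r ≤ (S.filter (fun i =>
        (S.filter (fun j => M i j = true)).Nonempty)).card)).card : ℝ) with hTot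
  set H : ℝ := Real.exp (k * (α * (1 + Real.log (m / (α * k))))) with hH
  have hch : (m.choose s : ℝ) ≤ H := une_choose_m m s k α hα0 hα1 hkpos hkm hsα
  have hAr : A ^ r ≤ Real.exp (k * ((1 - α) * (1 - d + y))) * (F:ℝ) ^ r := by
    refine (pow_le_pow_left₀ hA0 hAF r).trans ?_
    rw [mul_pow, ← Real.exp_nat_mul]
    apply mul_le_mul_of_nonneg_right (Real.exp_le_exp.2 _) (by positivity)
    have : 1 - d + y ≤ 0 := by linarith
    have := mul_le_mul_of_nonpos_right hrα this
    linarith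
  have hFpow : 0 < (F:ℝ) ^ r := by positivity
  have hfinal : Tot ≤ G.card * Real.exp (-(c * k)) := by
    have h1 : Tot * (F:ℝ) ^ r ≤ (G.card * Real.exp (-(c * k))) * (F:ℝ) ^ r := by
      refine hmid.trans ?_
      have hBpos : 0 < B := Real.exp_pos _
      have hPpos : 0 < P := Real.exp_pos _
      calc (G.card : ℝ) * (B * P * A ^ r * (m.choose s : ℝ))
          ≤ G.card * (B * P * (Real.exp (k * ((1 - α) * (1 - d + y))) * (F:ℝ) ^ r) * H) := by
            gcongr
        _ = G.card * (P * Real.exp (k * ((1 - α) * (1 - d + y))) * H * B) * (F:ℝ) ^ r := by ring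
        _ ≤ (G.card * Real.exp (-(c * k))) * (F:ℝ) ^ r := by
            gcongr
            rw [hP, hH, hB, ← Real.exp_add, ← Real.exp_add, ← Real.exp_add]
            apply Real.exp_le_exp.2
            have hnum := une_numeric δ g y θ d ε α L hδ hy0 hy1 (by rw [hy]; ring) hgd hd1' hdδ hθQ
              hε0 hεθ hα0.le hαθ hαL _ hX
            have h2 := mul_le_mul_of_nonneg_left hnum hkr.le
            have h3 := mul_le_mul_of_nonneg_right hcC hkr.le
            linarith
    exact le_of_mul_le_mul_right h1 hFpow
  calc _ ≤ (G.card : ℝ)⁻¹ * (G.card * Real.exp (-(c * k))) := by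
        gcongr
        exact hsum.trans hfinal
    _ = 1 * Real.exp (-(c * k)) := by field_simp
    _ ≤ c⁻¹ * Real.exp (-(c * k)) := by gcongr
end

section
/- Fix d > 0. Let A be an n×n random matrix with independent Ber(d/n) entries, regarded as the adjacency matrix of a digraph on [n] (with (i,j) an edge iff A_{ij} = 1). Then for every K > 0 and every γ > 1/2, there exists N such that for all n ≥ N, with probability at least 1 − n^{−K} the following holds simultaneously for all integers x, y ≥ 0: |#{ i ∈ [n] : (deg⁺_A(i), deg⁻_A(i)) = (x, y) } − (d^x e^{−d}/x!)·(d^y e^{−d}/y!)·n| ≤ n^γ. -/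
open MeasureTheory

/-- The Bernoulli measure on `ℝ`, putting mass `p` at `1` and mass `1 - p` at `0`. -/
noncomputable def bernoulliR (p : ℝ) : Measure ℝ :=
  ENNReal.ofReal p • Measure.dirac 1 + ENNReal.ofReal (1 - p) • Measure.dirac 0

/-- The law of an `n × n` matrix with iid `Ber(p)` entries. -/
noncomputable def iidMatrixLawR (n : ℕ) (p : ℝ) : Measure (Fin n → Fin n → ℝ) :=
  Measure.pi fun _ => Measure.pi fun _ => bernoulliR p

namespace DegDist

/-- Bernoulli weight. -/
noncomputable def bw (p : ℝ) (b : Bool) : ℝ := if b then p else 1 - p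

/-- Finite expectation for iid Bernoulli bits. -/
noncomputable def EE {ι : Type*} [Fintype ι] [DecidableEq ι] (p : ℝ) (f : (ι → Bool) → ℝ) : ℝ :=
  ∑ ω : ι → Bool, (∏ i, bw p (ω i)) * f ω

/-- Averaging over one coordinate. -/
noncomputable def TT {ι : Type*} [DecidableEq ι] (p : ℝ) (e : ι) (f : (ι → Bool) → ℝ) :
    (ι → Bool) → ℝ :=
  fun ω => (1 - p) * f (Function.update ω e false) + p * f (Function.update ω e true)

section fin
variable {ι : Type*} [Fintype ι] [DecidableEq ι]

set_option linter.unusedSectionVars false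

lemma EE_TT (p : ℝ) (e : ι) (f : (ι → Bool) → ℝ) : EE p (TT p e f) = EE p f := by
  have key : ∀ g : (ι → Bool) → ℝ, EE p g =
      ∑ x : ({j : ι // j ≠ e} → Bool), ∑ b : Bool, bw p b * ((∏ i, bw p (x i)) *
        g ((Equiv.funSplitAt e Bool).symm (b, x))) := by
    intro g
    unfold EE
    rw [← Equiv.sum_comp (Equiv.funSplitAt e Bool).symm, Fintype.sum_prod_type_right]
    refine Finset.sum_congr rfl fun x _ => Finset.sum_congr rfl fun b _ => ?_
    rw [← mul_assoc]
    congr 1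
    rw [← Finset.mul_prod_erase Finset.univ _ (Finset.mem_univ e)]
    congr 1
    · simp
    · rw [Finset.prod_subtype (p := fun j => j ≠ e) (Finset.univ.erase e) (by simp)
        (fun i => bw p ((Equiv.funSplitAt e Bool).symm (b, x) i))]
      refine Finset.prod_congr rfl fun i _ => ?_
      simp [i.2]
  have hup : ∀ b c x, Function.update ((Equiv.funSplitAt e Bool).symm (b, x)) e c
      = (Equiv.funSplitAt e Bool).symm (c, x) := by
    intro b c x
    ext j
    by_cases h : j = e
    · subst h; simp
    · simp [h]
  rw [key, key]
  refine Finset.sum_congr rfl fun x _ => ?_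
  simp only [TT, hup, Fintype.sum_bool, bw]
  simp
  ring

lemma EE_one (p : ℝ) : EE (ι := ι) p (fun _ => 1) = 1 := by
  unfold EE
  simp only [mul_one]
  have := Finset.prod_univ_sum (fun _ : ι => (Finset.univ : Finset Bool)) (fun _ b => bw p b)
  rw [Fintype.piFinset_univ] at this
  rw [← this]
  simp [bw]

lemma EE_const (p c : ℝ) : EE (ι := ι) p (fun _ => c) = c := by
  have := EE_one (ι := ι) p
  unfold EE at *
  rw [← Finset.sum_mul]
  simp only [mul_one] at this
  rw [this, one_mul]

lemma W_nonneg {p : ℝ} (h0 : 0 ≤ p) (h1 : p ≤ 1) (ω : ι → Bool) : 0 ≤ ∏ i, bw p (ω i) := by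
  refine Finset.prod_nonneg fun i _ => ?_
  unfold bw; split_ifs <;> linarith

lemma EE_mono {p : ℝ} (h0 : 0 ≤ p) (h1 : p ≤ 1) {f g : (ι → Bool) → ℝ} (h : ∀ ω, f ω ≤ g ω) :
    EE p f ≤ EE p g :=
  Finset.sum_le_sum fun ω _ => mul_le_mul_of_nonneg_left (h ω) (W_nonneg h0 h1 ω)

lemma EE_smul (p c : ℝ) (f : (ι → Bool) → ℝ) : EE p (fun ω => c * f ω) = c * EE p f := by
  unfold EE; rw [Finset.mul_sum]; exact Finset.sum_congr rfl fun _ _ => by ring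

lemma EE_add (p : ℝ) (f g : (ι → Bool) → ℝ) :
    EE p (fun ω => f ω + g ω) = EE p f + EE p g := by
  unfold EE; rw [← Finset.sum_add_distrib]; exact Finset.sum_congr rfl fun _ _ => by ring

lemma EE_sum {κ : Type*} (s : Finset κ) (p : ℝ) (f : κ → (ι → Bool) → ℝ) :
    EE p (fun ω => ∑ k ∈ s, f k ω) = ∑ k ∈ s, EE p (f k) := by
  unfold EE; rw [Finset.sum_comm]
  exact Finset.sum_congr rfl fun _ _ => by rw [Finset.mul_sum]

/-- One-step mgf bound. -/
lemma one_step {p l a b c : ℝ} (h0 : 0 ≤ p) (hab : |b - a| ≤ c)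
    (hl : |l| * c ≤ 1) :
    (1 - p) * Real.exp (l * a) + p * Real.exp (l * b) ≤
      Real.exp (p * (l * c) ^ 2) * Real.exp (l * ((1 - p) * a + p * b)) := by
  set x := l * (b - a) with hx
  have hxc : |x| ≤ |l| * c := by
    rw [hx, abs_mul]; exact mul_le_mul_of_nonneg_left hab (abs_nonneg _)
  have hx1 : |x| ≤ 1 := hxc.trans hl
  have hq := Real.abs_exp_sub_one_sub_id_le hx1
  have hsq : x ^ 2 ≤ (l * c) ^ 2 := by
    have := pow_le_pow_left₀ (abs_nonneg x) hxc 2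
    rw [sq_abs] at this
    calc x ^ 2 ≤ (|l| * c) ^ 2 := this
      _ = (l * c) ^ 2 := by rw [mul_pow, mul_pow, sq_abs]
  have e1 : Real.exp (l * b) = Real.exp (l * a) * Real.exp x := by
    rw [← Real.exp_add]; congr 1; rw [hx]; ring
  have e2 : Real.exp (p * (l * c) ^ 2) * Real.exp (l * ((1 - p) * a + p * b)) =
      Real.exp (l * a) * Real.exp (p * (l * c) ^ 2 + p * x) := by
    rw [← Real.exp_add, ← Real.exp_add]; congr 1; rw [hx]; ring
  rw [e1, e2]
  have h3 : 1 + p * (Real.exp x - 1) ≤ Real.exp (p * (l * c) ^ 2 + p * x) := by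
    have h4 := Real.add_one_le_exp (p * (l * c) ^ 2 + p * x)
    have h5 := (abs_le.1 hq).2
    nlinarith
  have := mul_le_mul_of_nonneg_left h3 (Real.exp_nonneg (l * a))
  nlinarith

def BD (c : ℝ) (f : (ι → Bool) → ℝ) : Prop :=
  ∀ ω e, |f (Function.update ω e true) - f (Function.update ω e false)| ≤ c

lemma BD_TT {p c : ℝ} (h0 : 0 ≤ p) (h1 : p ≤ 1) {f : (ι → Bool) → ℝ} (hf : BD c f) (e : ι) :
    BD c (TT p e f) := by
  intro ω e'
  unfold TT
  by_cases h : e' = e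
  · subst h
    simp only [Function.update_idem, sub_self, abs_zero]
    exact (abs_nonneg _).trans (hf ω e')
  · rw [Function.update_comm h, Function.update_comm h, Function.update_comm h,
      Function.update_comm h]
    have h2 := abs_le.1 (hf (Function.update ω e false) e')
    have h3 := abs_le.1 (hf (Function.update ω e true) e')
    rw [abs_le]
    constructor <;> nlinarith

lemma mgf_aux {p c l : ℝ} (h0 : 0 ≤ p) (h1 : p ≤ 1) (hl : |l| * c ≤ 1)
    {f : (ι → Bool) → ℝ} (hf : BD c f) (s : Finset ι) :
    ∃ g : (ι → Bool) → ℝ, BD c g ∧ (∀ e ∈ s, ∀ ω v, g (Function.update ω e v) = g ω) ∧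
      EE p g = EE p f ∧
      EE p (fun ω => Real.exp (l * f ω)) ≤
        Real.exp (s.card * (p * (l * c) ^ 2)) * EE p (fun ω => Real.exp (l * g ω)) := by
  induction s using Finset.induction_on with
  | empty => exact ⟨f, hf, by simp, rfl, by simp⟩
  | insert e s he ih =>
    obtain ⟨g, hg, hi, hE, hm⟩ := ih
    refine ⟨TT p e g, BD_TT h0 h1 hg e, ?_, by rw [EE_TT, hE], ?_⟩
    · intro e' he' ω v
      by_cases h : e' = e
      · subst h; simp [TT]
      · have : e' ∈ s := by simpa [h] using he'
        simp only [TT]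
        rw [Function.update_comm h, Function.update_comm h, hi e' this, hi e' this]
    · refine hm.trans ?_
      rw [Finset.card_insert_of_notMem he]
      push_cast
      rw [add_mul, one_mul, Real.exp_add, mul_assoc]
      refine mul_le_mul_of_nonneg_left ?_ (Real.exp_nonneg _)
      rw [← EE_smul, ← EE_TT p e]
      refine EE_mono h0 h1 fun ω => ?_
      exact one_step h0 (hg ω e) hl

lemma mgf {p c l : ℝ} (h0 : 0 ≤ p) (h1 : p ≤ 1) (hl : |l| * c ≤ 1)
    {f : (ι → Bool) → ℝ} (hf : BD c f) :
    EE p (fun ω => Real.exp (l * f ω)) ≤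
      Real.exp (Fintype.card ι * (p * (l * c) ^ 2)) * Real.exp (l * EE p f) := by
  obtain ⟨g, -, hi, hE, hm⟩ := mgf_aux h0 h1 hl hf Finset.univ
  have hc : ∀ ω ω', g ω' = g ω := by
    intro ω ω'
    have : ∀ s : Finset ι, g (s.piecewise ω' ω) = g ω := by
      intro s
      induction s using Finset.induction_on with
      | empty => simp
      | insert e s he ih => rw [Finset.piecewise_insert, hi e (Finset.mem_univ _), ih]
    simpa using this Finset.univ
  obtain ⟨k, hk⟩ : ∃ k, g = fun _ => k := ⟨g (fun _ => true), funext fun ω => hc _ _⟩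
  subst hk
  rw [EE_const] at hE
  rw [EE_const, hE] at hm
  exact hm

open Classical in
/-- Probability. -/
noncomputable def PP (p : ℝ) (S : (ι → Bool) → Prop) : ℝ := EE p (fun ω => if S ω then 1 else 0)

lemma PP_mono {p : ℝ} (h0 : 0 ≤ p) (h1 : p ≤ 1) {S T : (ι → Bool) → Prop} (h : ∀ ω, S ω → T ω) :
    PP p S ≤ PP p T := by
  refine EE_mono h0 h1 fun ω => ?_
  by_cases hS : S ω
  · simp [hS, h ω hS]
  · simp only [hS, if_false]; split_ifs <;> norm_num

lemma PP_nonneg {p : ℝ} (h0 : 0 ≤ p) (h1 : p ≤ 1) (S : (ι → Bool) → Prop) : 0 ≤ PP p S := by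
  have := EE_const (ι := ι) p 0
  rw [← this]
  refine EE_mono h0 h1 fun ω => ?_
  split_ifs <;> norm_num

lemma PP_le_one {p : ℝ} (h0 : 0 ≤ p) (h1 : p ≤ 1) (S : (ι → Bool) → Prop) : PP p S ≤ 1 := by
  have := EE_const (ι := ι) p 1
  conv_rhs => rw [← this]
  refine EE_mono h0 h1 fun ω => ?_
  split_ifs <;> norm_num

lemma PP_compl (p : ℝ) (S : (ι → Bool) → Prop) : PP p S = 1 - PP p (fun ω => ¬ S ω) := by
  rw [eq_sub_iff_add_eq]
  unfold PP
  rw [← EE_add]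
  refine Eq.trans ?_ (EE_one (ι := ι) p)
  congr 1; ext ω
  by_cases h : S ω <;> simp only [h] <;> simp

lemma PP_union {κ : Type*} {p : ℝ} (h0 : 0 ≤ p) (h1 : p ≤ 1) (s : Finset κ)
    (S : κ → (ι → Bool) → Prop) :
    PP p (fun ω => ∃ k ∈ s, S k ω) ≤ ∑ k ∈ s, PP p (S k) := by
  classical
  unfold PP
  rw [← EE_sum]
  refine EE_mono h0 h1 fun ω => ?_
  split_ifs with h
  · obtain ⟨k, hk, hS⟩ := h
    have := Finset.single_le_sum (f := fun k => if S k ω then (1 : ℝ) else 0)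
      (fun i _ => by split_ifs <;> norm_num) hk
    simp only [hS, if_true] at this
    convert this
  · exact Finset.sum_nonneg fun i _ => by split_ifs <;> norm_num

lemma tail {p c l t : ℝ} (h0 : 0 ≤ p) (h1 : p ≤ 1) (hl0 : 0 ≤ l) (hl : l * c ≤ 1)
    {f : (ι → Bool) → ℝ} (hf : BD c f) :
    PP p (fun ω => t < |f ω - EE p f|) ≤
      2 * Real.exp (Fintype.card ι * (p * (l * c) ^ 2) - l * t) := by
  have m1 := mgf (l := l) h0 h1 (by rwa [abs_of_nonneg hl0]) hf
  have m2 := mgf (l := -l) h0 h1 (by rwa [abs_neg, abs_of_nonneg hl0]) hf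
  set M := EE p f
  calc PP p (fun ω => t < |f ω - M|)
      ≤ EE p (fun ω => Real.exp (-(l * M) - l * t) * Real.exp (l * f ω) +
          Real.exp (l * M - l * t) * Real.exp (-l * f ω)) := by
        refine EE_mono h0 h1 fun ω => ?_
        simp only [← Real.exp_add]
        have p1 := Real.exp_pos (-(l * M) - l * t + l * f ω)
        have p2 := Real.exp_pos (l * M - l * t + -l * f ω)
        split_ifs with h
        · rcases lt_abs.1 h with h | h
          · have : 1 ≤ Real.exp (-(l * M) - l * t + l * f ω) := by
              apply Real.one_le_exp; nlinarith
            linarith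
          · have : 1 ≤ Real.exp (l * M - l * t + -l * f ω) := by
              apply Real.one_le_exp; nlinarith
            linarith
        · linarith
    _ = Real.exp (-(l * M) - l * t) * EE p (fun ω => Real.exp (l * f ω)) +
          Real.exp (l * M - l * t) * EE p (fun ω => Real.exp (-l * f ω)) := by
        rw [EE_add, EE_smul, EE_smul]
    _ ≤ Real.exp (-(l * M) - l * t) * (Real.exp (Fintype.card ι * (p * (l * c) ^ 2)) *
          Real.exp (l * M)) + Real.exp (l * M - l * t) *
          (Real.exp (Fintype.card ι * (p * (-l * c) ^ 2)) * Real.exp (-l * M)) := by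
        gcongr
    _ = _ := by
        rw [two_mul, ← Real.exp_add, ← Real.exp_add, ← Real.exp_add, ← Real.exp_add]
        congr 2 <;> ring

end fin

/-- Poisson mass on the integers. -/
noncomputable def rr (t : ℝ) (k : ℤ) : ℝ :=
  if 0 ≤ k then t ^ k.toNat * Real.exp (-t) / (Nat.factorial k.toNat) else 0

lemma rr_nonneg {t : ℝ} (ht : 0 ≤ t) (k : ℤ) : 0 ≤ rr t k := by
  unfold rr; split_ifs
  · positivity
  · exact le_rfl

lemma rr_le_one {t : ℝ} (ht : 0 ≤ t) (k : ℤ) : rr t k ≤ 1 := by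
  unfold rr; split_ifs
  · have := Real.pow_div_factorial_le_exp t ht k.toNat
    calc t ^ k.toNat * Real.exp (-t) / (Nat.factorial k.toNat)
        = t ^ k.toNat / (Nat.factorial k.toNat) * Real.exp (-t) := by ring
      _ ≤ Real.exp t * Real.exp (-t) := by gcongr
      _ = 1 := by rw [← Real.exp_add]; simp
  · exact zero_le_one

lemma rr_deriv (t : ℝ) (k : ℤ) :
    HasDerivAt (fun t => rr t k) (rr t (k - 1) - rr t k) t := by
  rcases lt_or_ge k 0 with h | h
  · have h1 : ∀ t, rr t k = 0 := fun t => by simp [rr, not_le.2 h]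
    have h2 : rr t (k - 1) = 0 := by
      unfold rr; rw [if_neg]; omega
    simp only [h1, h2, sub_zero]
    exact hasDerivAt_const _ _
  · obtain ⟨m, rfl⟩ := Int.eq_ofNat_of_zero_le h
    have hE : HasDerivAt (fun t : ℝ => Real.exp (-t)) (-Real.exp (-t)) t := by
      simpa using (hasDerivAt_neg t).exp
    have h0 : (fun t => rr t (m : ℤ)) = fun t => t ^ m * Real.exp (-t) / (Nat.factorial m) := by
      ext t; simp [rr]
    rw [h0]
    have h3 := ((hasDerivAt_pow m t).mul hE).div_const (Nat.factorial m : ℝ)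
    refine h3.congr_deriv (Eq.symm ?_)
    cases m with
    | zero => simp [rr]
    | succ m =>
      have : ((m + 1 : ℕ) : ℤ) - 1 = m := by push_cast; ring
      rw [this]
      have e1 : rr t (m : ℤ) = t ^ m * Real.exp (-t) / (Nat.factorial m) := by simp [rr]
      have e2 : rr t ((m + 1 : ℕ) : ℤ) =
        t ^ (m + 1) * Real.exp (-t) / (Nat.factorial (m + 1)) := by
        unfold rr; rw [if_pos (by positivity)]; simp only [Int.toNat_natCast]
      rw [e1, e2, Nat.factorial_succ]
      have : (Nat.factorial m : ℝ) ≠ 0 := by positivity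
      have : (m : ℝ) + 1 ≠ 0 := by positivity
      push_cast
      field_simp
      ring

lemma rr_lip {t p : ℝ} (ht : 0 ≤ t) (hp : 0 ≤ p) (k : ℤ) : |rr (t + p) k - rr t k| ≤ p := by
  have := (convex_Ici (0 : ℝ)).norm_image_sub_le_of_norm_hasDerivWithin_le (C := 1)
    (f := fun t => rr t k) (x := t) (y := t + p)
    (fun x _ => (rr_deriv x k).hasDerivWithinAt) (fun x hx => by
      have hx : 0 ≤ x := hx
      rw [Real.norm_eq_abs, abs_le]
      constructor <;> linarith [rr_nonneg hx k, rr_nonneg hx (k - 1), rr_le_one hx k,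
        rr_le_one hx (k - 1)]) ht (by simp; linarith)
  simpa [abs_of_nonneg hp] using this

lemma rr_second {t p : ℝ} (ht : 0 ≤ t) (hp : 0 ≤ p) (k : ℤ) :
    |(1 - p) * rr t k + p * rr t (k - 1) - rr (t + p) k| ≤ 2 * p ^ 2 := by
  have := (convex_Icc t (t + p)).norm_image_sub_le_of_norm_hasDerivWithin_le (C := 2 * p)
    (f := fun s => rr s k - s * (rr t (k - 1) - rr t k)) (x := t) (y := t + p)
    (fun x _ => ((rr_deriv x k).sub (((hasDerivAt_id x).mul_const _))).hasDerivWithinAt)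
    (fun x hx => by
      have h1 := abs_le.1 (rr_lip ht (sub_nonneg.2 hx.1) k)
      have h2 := abs_le.1 (rr_lip ht (sub_nonneg.2 hx.1) (k - 1))
      rw [add_sub_cancel] at h1 h2
      have := hx.2
      rw [Real.norm_eq_abs, abs_le]
      constructor <;> linarith) (by simp [hp]) (by simp [hp])
  simp only [Real.norm_eq_abs, add_sub_cancel_left, abs_of_nonneg hp] at this
  rw [abs_sub_comm]
  calc _ = _ := ?_
    _ ≤ _ := this
    _ = _ := by ring
  congr 1; ring

lemma abs_mul_le_of {a b c : ℝ} (h : |a| ≤ c) (hb : 0 ≤ b) (hb1 : b ≤ 1) : |a * b| ≤ c := by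
  rw [abs_mul, abs_of_nonneg hb]
  nlinarith [abs_nonneg a]


open Filter Topology in
lemma asym (d K γ : ℝ) (hγ : 1 / 2 < γ) :
    ∃ N : ℕ, ∀ n : ℕ, N ≤ n → 4 ≤ n ∧ d ≤ n ∧ 4 * d ^ 2 + 3 * d ≤ (n : ℝ) ^ γ / 2 ∧
      ((n : ℝ) + 1) ^ 2 * (2 * Real.exp (4 * d - (n : ℝ) ^ (γ - 1 / 2) / 2)) ≤ (n : ℝ) ^ (-K) := by
  have hc : Tendsto (fun n : ℕ => (n : ℝ)) atTop atTop := tendsto_natCast_atTop_atTop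
  have hd : 0 < γ - 1 / 2 := by linarith
  have h2 := hc.eventually_ge_atTop d
  have h3 := ((tendsto_rpow_atTop (show 0 < γ by linarith)).comp hc).eventually_ge_atTop
    (2 * (4 * d ^ 2 + 3 * d))
  have h4 := ((tendsto_rpow_mul_exp_neg_mul_atTop_nhds_zero ((K + 2) / (γ - 1 / 2)) (1/2)
    (by norm_num)).comp ((tendsto_rpow_atTop hd).comp hc)).eventually_le_const
    (show (0 : ℝ) < 1 / (8 * Real.exp (4 * d)) by positivity)
  obtain ⟨N, hN⟩ := eventually_atTop.1 ((eventually_ge_atTop 4).and (h2.and (h3.and h4)))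
  refine ⟨N, fun n hn => ?_⟩
  obtain ⟨a, b, c, e⟩ := hN n hn
  refine ⟨a, b, by simp only [Function.comp] at c; linarith, ?_⟩
  simp only [Function.comp] at e
  have hn4 : (4 : ℝ) ≤ n := by exact_mod_cast a
  have hn0 : (0 : ℝ) < n := by linarith
  rw [← Real.rpow_mul hn0.le, mul_div_cancel₀ _ hd.ne'] at e
  rw [le_div_iff₀ (by positivity)] at e
  have hE : Real.exp (4 * d - (n : ℝ) ^ (γ - 1 / 2) / 2) =
      Real.exp (4 * d) * Real.exp (-(1 / 2) * (n : ℝ) ^ (γ - 1 / 2)) := by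
    rw [← Real.exp_add]; congr 1; ring
  have hK : (n : ℝ) ^ (K + 2) = (n : ℝ) ^ K * (n : ℝ) ^ 2 := by
    rw [Real.rpow_add hn0]; norm_cast
  rw [hE, Real.rpow_neg hn0.le, ← one_div, le_div_iff₀ (by positivity)]
  rw [hK] at e
  have hq : ((n : ℝ) + 1) ^ 2 ≤ 4 * (n : ℝ) ^ 2 := by nlinarith
  set X := Real.exp (4 * d)
  set Y := Real.exp (-(1 / 2) * (n : ℝ) ^ (γ - 1 / 2))
  calc ((n : ℝ) + 1) ^ 2 * (2 * (X * Y)) * (n : ℝ) ^ K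
      ≤ (4 * (n : ℝ) ^ 2) * (2 * (X * Y)) * (n : ℝ) ^ K := by gcongr
    _ = _ := by ring
    _ ≤ 1 := e

section cmp
variable {ι : Type*} [Fintype ι] [DecidableEq ι]

/-- Weighted sum of bits in `S`. -/
def ZZ (u : ι → ℤ) (S : Finset ι) (ω : ι → Bool) : ℤ := ∑ e ∈ S, if ω e then u e else 0

lemma ZZ_insert (u : ι → ℤ) {S : Finset ι} {e : ι} (he : e ∉ S) (ω : ι → Bool) (b : Bool) :
    ZZ u (insert e S) (Function.update ω e b) = (if b then u e else 0) + ZZ u S ω := by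
  unfold ZZ
  rw [Finset.sum_insert he]
  congr 1
  · simp
  · refine Finset.sum_congr rfl fun i hi => ?_
    have : i ≠ e := fun h => he (h ▸ hi)
    simp [this]

lemma hh_insert (p : ℝ) (u w : ι → ℤ) {S : Finset ι} {e : ι} (he : e ∉ S) (x y : ℤ) :
    PP p (fun ω => ZZ u (insert e S) ω = x ∧ ZZ w (insert e S) ω = y) =
      (1 - p) * PP p (fun ω => ZZ u S ω = x ∧ ZZ w S ω = y) +
        p * PP p (fun ω => ZZ u S ω = x - u e ∧ ZZ w S ω = y - w e) := by
  unfold PP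
  rw [← EE_TT p e, ← EE_smul, ← EE_smul, ← EE_add]
  congr 1
  ext ω
  simp only [TT, ZZ_insert _ he, eq_sub_iff_add_eq']
  simp

lemma compare {p : ℝ} (h0 : 0 ≤ p) (h1 : p ≤ 1) (u w : ι → ℤ) (hu : ∀ e, u e = 0 ∨ u e = 1)
    (hw : ∀ e, w e = 0 ∨ w e = 1) (S : Finset ι) : ∀ x y : ℤ,
    |PP p (fun ω => ZZ u S ω = x ∧ ZZ w S ω = y) -
      rr (∑ e ∈ S, p * (u e : ℝ)) x * rr (∑ e ∈ S, p * (w e : ℝ)) y| ≤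
      ∑ e ∈ S, (2 * p ^ 2 * ((u e : ℝ) + w e) + 3 * p * (u e * w e)) := by
  have pos : ∀ (v : ι → ℤ), (∀ e, v e = 0 ∨ v e = 1) → ∀ S : Finset ι,
      0 ≤ ∑ e ∈ S, p * (v e : ℝ) := by
    intro v hv S
    refine Finset.sum_nonneg fun e _ => ?_
    rcases hv e with h | h <;> simp [h, h0]
  induction S using Finset.induction_on with
  | empty =>
    intro x y
    have hr : ∀ k : ℤ, rr 0 k = if k = 0 then 1 else 0 := by
      intro k
      rcases lt_trichotomy k 0 with h | h | h
      · simp [rr, not_le.2 h, h.ne]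
      · subst h; simp [rr]
      · have : k.toNat ≠ 0 := by omega
        simp [rr, h.le, h.ne', this]
    simp only [ZZ, Finset.sum_empty, hr, PP]
    by_cases hx : x = 0 <;> by_cases hy : y = 0 <;> simp [hx, hy, Ne.symm, eq_comm, EE_const, -zero_eq_mul] <;>
      rw [EE_const] <;> norm_num
  | insert e S he ih =>
    intro x y
    rw [hh_insert p u w he, Finset.sum_insert he, Finset.sum_insert he, Finset.sum_insert he]
    have ha := pos u hu S
    have hb := pos w hw S
    set a := ∑ e ∈ S, p * (u e : ℝ)
    set b := ∑ e ∈ S, p * (w e : ℝ)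
    set ε := ∑ e ∈ S, (2 * p ^ 2 * ((u e : ℝ) + w e) + 3 * p * (u e * w e))
    have hH0 : ∀ x y, 0 ≤ PP p (fun ω => ZZ u S ω = x ∧ ZZ w S ω = y) :=
      fun x y => PP_nonneg h0 h1 _
    have hH1 : ∀ x y, PP p (fun ω => ZZ u S ω = x ∧ ZZ w S ω = y) ≤ 1 :=
      fun x y => PP_le_one h0 h1 _
    generalize hH : (fun x y => PP p (fun ω => ZZ u S ω = x ∧ ZZ w S ω = y)) = H at *
    have hH' : ∀ x y, PP p (fun ω => ZZ u S ω = x ∧ ZZ w S ω = y) = H x y := by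
      intro x y; rw [← hH]
    simp only [hH'] at *
    have i1 := abs_le.1 (ih x y)
    have i2 := abs_le.1 (ih (x - u e) (y - w e))
    have hap : 0 ≤ a + p := by linarith
    have hbp : 0 ≤ b + p := by linarith
    rcases hu e with h | h <;> rcases hw e with h' | h' <;> rw [h, h'] at i2 <;> rw [h, h'] <;>
      simp only [sub_zero, Int.cast_zero, Int.cast_one, mul_zero, mul_one, zero_add, add_zero]
        at i2 ⊢
    · rw [abs_le]; constructor <;> linarith
    · have := abs_le.1 (abs_mul_le_of (rr_second hb h0 y) (rr_nonneg ha x) (rr_le_one ha x))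
      rw [add_comm p b, abs_le]
      constructor <;> nlinarith
    · have := abs_le.1 (abs_mul_le_of (rr_second ha h0 x) (rr_nonneg hb y) (rr_le_one hb y))
      rw [add_comm p a, abs_le]
      constructor <;> nlinarith
    · have k1 := abs_le.1 (abs_mul_le_of (rr_lip ha h0 x) (rr_nonneg hb y) (rr_le_one hb y))
      have k2 := abs_le.1 (abs_mul_le_of (rr_lip hb h0 y) (rr_nonneg hap x) (rr_le_one hap x))
      have a1 := hH0 x y
      have a2 := hH1 x y
      have a3 := hH0 (x - 1) (y - 1)
      have a4 := hH1 (x - 1) (y - 1)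
      rw [add_comm p a, add_comm p b, abs_le]
      constructor <;> nlinarith [sq_nonneg p, mul_nonneg h0 a1, mul_nonneg h0 a3,
        mul_le_mul_of_nonneg_left a2 h0, mul_le_mul_of_nonneg_left a4 h0]

end cmp

section cnt
variable {n : ℕ}

/-- Out-degree. -/
def outd (ω : Fin n × Fin n → Bool) (i : Fin n) : ℕ :=
  (Finset.univ.filter (fun j => ω (i, j) = true)).card
/-- In-degree. -/
def ind (ω : Fin n × Fin n → Bool) (i : Fin n) : ℕ :=
  (Finset.univ.filter (fun j => ω (j, i) = true)).card

/-- Number of vertices of the given type. -/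
noncomputable def cnt (x y : ℕ) (ω : Fin n × Fin n → Bool) : ℝ :=
  ∑ i, if outd ω i = x ∧ ind ω i = y then 1 else 0

lemma cnt_BD (x y : ℕ) : BD 2 (cnt (n := n) x y) := by
  rintro ω ⟨a, b⟩
  unfold cnt
  rw [← Finset.sum_sub_distrib]
  calc _ ≤ ∑ i : Fin n, ((if i = a then (1 : ℝ) else 0) + (if i = b then 1 else 0)) := by
        refine (Finset.abs_sum_le_sum_abs _ _).trans (Finset.sum_le_sum fun i _ => ?_)
        by_cases h : i = a ∨ i = b
        · have : (1 : ℝ) ≤ (if i = a then (1 : ℝ) else 0) + (if i = b then 1 else 0) := by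
            rcases h with h | h
            · rw [if_pos h]; split_ifs <;> norm_num
            · rw [if_pos h]; split_ifs <;> norm_num
          refine le_trans ?_ this
          split_ifs <;> norm_num
        · push Not at h
          have ho : ∀ v, outd (Function.update ω (a, b) v) i = outd ω i := by
            intro v; simp [outd, Function.update_apply, h.1]
          have hi : ∀ v, ind (Function.update ω (a, b) v) i = ind ω i := by
            intro v; simp [ind, Function.update_apply, h.2]
          simp [ho, hi, h.1, h.2]
    _ = 2 := by
        rw [Finset.sum_add_distrib]
        simp
        norm_num

lemma vertex_mean {p : ℝ} (h0 : 0 ≤ p) (h1 : p ≤ 1) (i : Fin n) (x y : ℕ) :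
    |PP p (fun ω => outd ω i = x ∧ ind ω i = y) - rr (n * p) x * rr (n * p) y| ≤
      4 * n * p ^ 2 + 3 * p := by
  have := compare h0 h1 (fun e : Fin n × Fin n => if e.1 = i then 1 else 0)
    (fun e : Fin n × Fin n => if e.2 = i then 1 else 0)
    (fun e => by by_cases h : e.1 = i <;> by_cases h' : e.2 = i <;> simp [h, h']) (fun e => by by_cases h : e.1 = i <;> by_cases h' : e.2 = i <;> simp [h, h'])
    Finset.univ x y
  have z1 : ∀ ω, ZZ (fun e : Fin n × Fin n => if e.1 = i then 1 else 0) Finset.univ ω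
      = outd ω i := by
    intro ω
    unfold ZZ outd
    rw [Fintype.sum_prod_type, Finset.sum_eq_single i]
    · simp
    · intro b _ hb; simp [hb]
    · simp
  have z2 : ∀ ω, ZZ (fun e : Fin n × Fin n => if e.2 = i then 1 else 0) Finset.univ ω
      = ind ω i := by
    intro ω
    unfold ZZ ind
    rw [Fintype.sum_prod_type_right, Finset.sum_eq_single i]
    · simp
    · intro b _ hb; simp [hb]
    · simp
  have s1 : ∑ e : Fin n × Fin n, (((if e.1 = i then 1 else 0 : ℤ)) : ℝ) = n := by
    rw [Fintype.sum_prod_type, Finset.sum_eq_single i]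
    · simp
    · intro b _ hb; simp [hb]
    · simp
  have s2 : ∑ e : Fin n × Fin n, (((if e.2 = i then 1 else 0 : ℤ)) : ℝ) = n := by
    rw [Fintype.sum_prod_type_right, Finset.sum_eq_single i]
    · simp
    · intro b _ hb; simp [hb]
    · simp
  have s3 : ∑ e : Fin n × Fin n, ((((if e.1 = i then 1 else 0 : ℤ)) : ℝ) *
      (((if e.2 = i then 1 else 0 : ℤ)) : ℝ)) = 1 := by
    rw [Fintype.sum_prod_type, Finset.sum_eq_single i]
    · simp
    · intro b _ hb; simp [hb]
    · simp
  rw [← Finset.mul_sum, ← Finset.mul_sum, Finset.sum_add_distrib, ← Finset.mul_sum,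
    ← Finset.mul_sum, Finset.sum_add_distrib, s1, s2, s3] at this
  simp only [z1, z2, Nat.cast_inj] at this
  rw [mul_comm p] at this
  refine this.trans (le_of_eq ?_)
  ring

lemma cnt_mean {p : ℝ} (h0 : 0 ≤ p) (h1 : p ≤ 1) (x y : ℕ) :
    |EE p (cnt (n := n) x y) - rr (n * p) x * rr (n * p) y * n| ≤
      n * (4 * n * p ^ 2 + 3 * p) := by
  have : EE p (cnt (n := n) x y) = ∑ i : Fin n, PP p (fun ω => outd ω i = x ∧ ind ω i = y) := by
    unfold cnt PP
    rw [EE_sum]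
    refine Finset.sum_congr rfl fun i _ => ?_
    congr 1; ext ω; congr
  rw [this]
  have h2 : rr (n * p) x * rr (n * p) y * n = ∑ i : Fin n, rr (n * p) x * rr (n * p) y := by
    simp; ring
  rw [h2, ← Finset.sum_sub_distrib]
  refine (Finset.abs_sum_le_sum_abs _ _).trans ?_
  refine (Finset.sum_le_sum fun i _ => vertex_mean h0 h1 i x y).trans ?_
  simp [mul_add]

lemma main_fin (d : ℝ) (hd : 0 < d) (K γ : ℝ) (n : ℕ) (hn : 4 ≤ n) (hdn : d ≤ n)
    (hC : 4 * d ^ 2 + 3 * d ≤ (n : ℝ) ^ γ / 2)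
    (hT : ((n : ℝ) + 1) ^ 2 * (2 * Real.exp (4 * d - (n : ℝ) ^ (γ - 1 / 2) / 2)) ≤
      (n : ℝ) ^ (-K)) :
    1 - (n : ℝ) ^ (-K) ≤ PP (d / n) (fun ω : Fin n × Fin n → Bool =>
      ∀ x y : ℕ, |cnt x y ω - rr d x * rr d y * n| ≤ (n : ℝ) ^ γ) := by
  have hn4 : (4 : ℝ) ≤ n := by exact_mod_cast hn
  have hn0 : (0 : ℝ) < n := by linarith
  set p := d / n with hp
  have h0 : 0 ≤ p := by positivity
  have h1 : p ≤ 1 := by rw [hp, div_le_one hn0]; exact hdn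
  have hnp : n * p = d := by rw [hp]; field_simp
  rw [PP_compl]
  suffices h : PP p (fun ω : Fin n × Fin n → Bool =>
      ¬ ∀ x y : ℕ, |cnt x y ω - rr d x * rr d y * n| ≤ (n : ℝ) ^ γ) ≤ (n : ℝ) ^ (-K) by linarith
  set B := Finset.range (n + 1) ×ˢ Finset.range (n + 1)
  calc _ ≤ PP p (fun ω : Fin n × Fin n → Bool => ∃ k ∈ B,
          (n : ℝ) ^ γ / 2 < |cnt k.1 k.2 ω - EE p (cnt (n := n) k.1 k.2)|) := by
        refine PP_mono h0 h1 fun ω hω => ?_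
        push Not at hω
        obtain ⟨x, y, hxy⟩ := hω
        have hm := cnt_mean (n := n) h0 h1 x y
        have e : (n : ℝ) * (4 * n * p ^ 2 + 3 * p) = 4 * d ^ 2 + 3 * d := by
          rw [← hnp]; ring
        rw [e, hnp] at hm
        have hlt : (n : ℝ) ^ γ / 2 < |cnt x y ω - EE p (cnt (n := n) x y)| := by
          have := abs_sub_le (cnt x y ω) (EE p (cnt (n := n) x y)) (rr d x * rr d y * n)
          linarith
        refine ⟨(x, y), ?_, hlt⟩
        by_contra hB
        have hz : ∀ ω, cnt (n := n) x y ω = 0 := by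
          intro ω
          unfold cnt
          refine Finset.sum_eq_zero fun i _ => ?_
          rw [if_neg]
          rintro ⟨hx, hy⟩
          apply hB
          have l1 : outd ω i ≤ n := (Finset.card_le_univ _).trans (by simp)
          have l2 : ind ω i ≤ n := (Finset.card_le_univ _).trans (by simp)
          simp only [B, Finset.mem_product, Finset.mem_range]
          omega
        have hz' : cnt (n := n) x y = fun _ => 0 := funext hz
        rw [hz', EE_const] at hlt
        simp only [sub_zero, abs_zero] at hlt
        have : 0 ≤ (n : ℝ) ^ γ := by positivity
        linarith
    _ ≤ ∑ k ∈ B, PP p (fun ω : Fin n × Fin n → Bool =>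
          (n : ℝ) ^ γ / 2 < |cnt k.1 k.2 ω - EE p (cnt (n := n) k.1 k.2)|) :=
        PP_union h0 h1 B _
    _ ≤ ∑ k ∈ B, 2 * Real.exp (4 * d - (n : ℝ) ^ (γ - 1 / 2) / 2) := by
        refine Finset.sum_le_sum fun k _ => ?_
        have hs : (n : ℝ) ^ (-(1 / 2) : ℝ) * (n : ℝ) ^ (-(1 / 2) : ℝ) * n = 1 := by
          rw [← Real.rpow_add hn0]; norm_num
          rw [Real.rpow_neg_one]; field_simp
        have hl : (n : ℝ) ^ (-(1 / 2) : ℝ) * 2 ≤ 1 := by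
          have hpos : 0 < (n : ℝ) ^ (-(1 / 2) : ℝ) := by positivity
          by_contra hc
          push Not at hc
          nlinarith
        have := tail (t := (n : ℝ) ^ γ / 2) h0 h1 (by positivity) hl (cnt_BD (n := n) k.1 k.2)
        refine this.trans (le_of_eq ?_)
        congr 2
        have e2 : (n : ℝ) ^ (γ - 1 / 2) = (n : ℝ) ^ (-(1 / 2) : ℝ) * (n : ℝ) ^ γ := by
          rw [← Real.rpow_add hn0]; congr 1; ring
        rw [e2]
        have e3 : (Fintype.card (Fin n × Fin n) : ℝ) = n * n := by simp
        rw [e3]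
        generalize (n : ℝ) ^ (-(1 / 2) : ℝ) = s at hs
        have : (n : ℝ) * n * (p * (s * 2) ^ 2) = 4 * d := by
          calc (n : ℝ) * n * (p * (s * 2) ^ 2) = 4 * (n * p) * (s * s * n) := by ring
            _ = 4 * d := by rw [hs, hnp, mul_one]
        rw [this]; ring
    _ = ((n : ℝ) + 1) ^ 2 * (2 * Real.exp (4 * d - (n : ℝ) ^ (γ - 1 / 2) / 2)) := by
        rw [Finset.sum_const, nsmul_eq_mul]
        simp only [B, Finset.card_product, Finset.card_range]
        push_cast; ring
    _ ≤ _ := hT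

/-- Embedding of bit configurations as real matrices. -/
noncomputable def emb (ω : Fin n × Fin n → Bool) : Fin n → Fin n → ℝ :=
  fun i j => if ω (i, j) then 1 else 0

lemma emb_inj : Function.Injective (emb (n := n)) := by
  intro a b h
  ext ⟨i, j⟩
  have := congrFun (congrFun h i) j
  unfold emb at this
  cases ha : a (i, j) <;> cases hb : b (i, j) <;> simp_all

lemma law_emb {p : ℝ} (h0 : 0 ≤ p) (h1 : p ≤ 1) (ω : Fin n × Fin n → Bool) :
    iidMatrixLawR n p {emb ω} = ENNReal.ofReal (∏ e, bw p (ω e)) := by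
  have hfin : IsFiniteMeasure (bernoulliR p) := by
    unfold bernoulliR
    constructor
    simp
  unfold iidMatrixLawR
  rw [Measure.pi_singleton]
  simp only [Measure.pi_singleton]
  have hb : ∀ b, 0 ≤ bw p b := by intro b; unfold bw; split_ifs <;> linarith
  rw [Fintype.prod_prod_type, ENNReal.ofReal_prod_of_nonneg
    (fun i _ => Finset.prod_nonneg fun j _ => hb _)]
  refine Finset.prod_congr rfl fun i _ => ?_
  rw [ENNReal.ofReal_prod_of_nonneg (fun j _ => hb _)]
  refine Finset.prod_congr rfl fun j _ => ?_
  unfold emb bernoulliR bw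
  cases ω (i, j) <;> simp

lemma law_ge {p : ℝ} (h0 : 0 ≤ p) (h1 : p ≤ 1) (T : Set (Fin n → Fin n → ℝ)) :
    ENNReal.ofReal (PP p (fun ω => emb ω ∈ T)) ≤ iidMatrixLawR n p T := by
  classical
  set F : Finset (Fin n → Fin n → ℝ) :=
    (Finset.univ.filter (fun ω => emb ω ∈ T)).map ⟨emb, emb_inj⟩ with hF
  have hsub : (F : Set (Fin n → Fin n → ℝ)) ⊆ T := by
    intro A hA
    simp only [hF, Finset.coe_map, Set.mem_image, Finset.mem_coe, Finset.mem_filter] at hA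
    obtain ⟨ω, hω, rfl⟩ := hA
    exact hω.2
  refine le_trans (le_of_eq ?_) (measure_mono hsub)
  rw [← sum_measure_singleton, hF, Finset.sum_map]
  simp only [Function.Embedding.coeFn_mk, law_emb h0 h1]
  rw [← ENNReal.ofReal_sum_of_nonneg (fun ω _ => W_nonneg h0 h1 ω), Finset.sum_filter]
  congr 1
  unfold PP EE
  refine Finset.sum_congr rfl fun ω _ => ?_
  by_cases h : emb ω ∈ T <;> simp [h]

lemma ncard_emb (x y : ℕ) (ω : Fin n × Fin n → Bool) :
    (({i : Fin n | {j : Fin n | emb ω i j = 1}.ncard = x ∧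
                  {j : Fin n | emb ω j i = 1}.ncard = y}).ncard : ℝ) = cnt x y ω := by
  have h1 : ∀ i, {j : Fin n | emb ω i j = 1}.ncard = outd ω i := by
    intro i
    rw [Set.ncard_eq_toFinset_card', outd]
    congr 1; ext j; simp [emb]
  have h2 : ∀ i, {j : Fin n | emb ω j i = 1}.ncard = ind ω i := by
    intro i
    rw [Set.ncard_eq_toFinset_card', ind]
    congr 1; ext j; simp [emb]
  simp only [h1, h2]
  rw [Set.ncard_eq_toFinset_card', cnt, Finset.sum_boole]
  congr 2; ext j; simp

end cnt

end DegDist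

theorem degree_distribution_convergence (d : ℝ) (hd : 0 < d) (K γ : ℝ) (hK : 0 < K)
    (hγ : 1 / 2 < γ) :
    ∃ N : ℕ, ∀ n : ℕ, N ≤ n →
      ENNReal.ofReal (1 - (n : ℝ) ^ (-K)) ≤
        iidMatrixLawR n (d / n)
          {A | ∀ x y : ℕ,
            |(({i : Fin n | {j : Fin n | A i j = 1}.ncard = x ∧
                  {j : Fin n | A j i = 1}.ncard = y}).ncard : ℝ) -
              (d ^ x * Real.exp (-d) / (Nat.factorial x)) *
                (d ^ y * Real.exp (-d) / (Nat.factorial y)) * n| ≤ (n : ℝ) ^ γ} := by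
  obtain ⟨N, hN⟩ := DegDist.asym d K γ hγ
  refine ⟨N, fun n hn => ?_⟩
  obtain ⟨h4, hdn, hC, hT⟩ := hN n hn
  have hm := DegDist.main_fin d hd K γ n h4 hdn hC hT
  have hn0 : (0 : ℝ) < n := by
    have : (4 : ℝ) ≤ n := by exact_mod_cast h4
    linarith
  have h0 : 0 ≤ d / n := by positivity
  have h1 : d / n ≤ 1 := by rw [div_le_one hn0]; exact hdn
  refine le_trans (ENNReal.ofReal_le_ofReal ?_) (DegDist.law_ge h0 h1 _)
  refine hm.trans (DegDist.PP_mono h0 h1 fun ω hω => ?_)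
  intro x y
  rw [DegDist.ncard_emb]
  have := hω x y
  simpa [DegDist.rr] using this
end

section
/- There exists an absolute constant C > 0 such that the following holds. Fix δ > 0 and γ ∈ (0,1), and let 1 ≤ m ≤ n/2. Let ξ ∈ {0,1}^n be chosen uniformly at random among all {0,1}-vectors with Σ_i ξ_i = m. Let v ∈ ℂ^n be such that for every θ ∈ ℂ, #{ i : |v_i − θ| ≤ δ } ≤ (1−γ)n. Then the Lévy concentration function satisfies ℒ(Σ_{i=1}^n ξ_i v_i, δ) ≤ C·( (γm)^{−1/2} + exp(−C^{−1} γ² m) ). -/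
namespace SliceAC

open Finset
open scoped Pointwise

theorem avg {G X : Type*} [Group G] [Fintype G] [Fintype X] [MulAction G X]
    [MulAction.IsPretransitive G X] (F : X → ℝ) (x : X) :
    (Fintype.card X : ℝ) * ∑ g : G, F (g • x) = Fintype.card G * ∑ y, F y := by
  have h1 : ∀ y : X, ∑ g : G, F (g • y) = ∑ g : G, F (g • x) := by
    intro y
    obtain ⟨h, rfl⟩ := MulAction.exists_smul_eq G x y
    rw [← Equiv.sum_comp (Equiv.mulRight h) (fun g => F (g • x))]
    simp [mul_smul]
  have h2 : ∑ y : X, ∑ g : G, F (g • y) = ∑ g : G, ∑ y : X, F y := by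
    rw [Finset.sum_comm]
    refine Finset.sum_congr rfl fun g _ => ?_
    exact Equiv.sum_comp (MulAction.toPerm g) F
  simp only [h1] at h2
  simpa using h2

theorem avg_slice {n m : ℕ} (P : Finset (Fin n) → Prop) [DecidablePred P] (T : Finset (Fin n))
    (hT : T.card = m) :
    (((univ : Finset (Fin n)).powersetCard m).card : ℝ) *
      ∑ g : Equiv.Perm (Fin n), (if P (T.map g.toEmbedding) then (1 : ℝ) else 0) =
    Fintype.card (Equiv.Perm (Fin n)) *
      ((((univ : Finset (Fin n)).powersetCard m).filter P).card : ℝ) := by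
  classical
  have h1 : ∀ U U' : Finset (Fin n), U.card = m → U'.card = m →
      ∑ g : Equiv.Perm (Fin n), (if P (U.map g.toEmbedding) then (1 : ℝ) else 0)
      = ∑ g : Equiv.Perm (Fin n), (if P (U'.map g.toEmbedding) then (1 : ℝ) else 0) := by
    intro U U' hU hU'
    have := Set.powersetCard.isPretransitive (α := Fin n) (n := m)
    obtain ⟨h, hh⟩ := MulAction.exists_smul_eq (Equiv.Perm (Fin n))
      (Set.powersetCard.ofCard hU) (Set.powersetCard.ofCard hU')
    have hh2 : U.map h.toEmbedding = U' := by
      have := congrArg Subtype.val hh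
      have e : ((h • (Set.powersetCard.ofCard hU) : Set.powersetCard (Fin n) m) : Finset (Fin n))
        = h • U := rfl
      rw [e] at this
      rw [Finset.map_eq_image]
      exact this
    subst hh2
    rw [← Equiv.sum_comp (Equiv.mulRight h)]
    simp only [Finset.map_map]
    rfl
  have h2 : ∑ U ∈ (univ : Finset (Fin n)).powersetCard m, ∑ g : Equiv.Perm (Fin n),
      (if P (U.map g.toEmbedding) then (1 : ℝ) else 0) =
      ∑ g : Equiv.Perm (Fin n), ((((univ : Finset (Fin n)).powersetCard m).filter P).card : ℝ) := by
    rw [Finset.sum_comm]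
    refine Finset.sum_congr rfl fun g _ => ?_
    rw [Finset.card_filter]
    push_cast
    refine Finset.sum_bij (fun U _ => U.map g.toEmbedding) ?_ ?_ ?_ ?_
    · intro U hU
      simpa using hU
    · intro U _ U' _ h
      exact Finset.map_injective _ h
    · intro U hU
      refine ⟨U.map g.symm.toEmbedding, by simpa using hU, ?_⟩
      ext x
      simp
    · intros; rfl
  rw [Finset.sum_congr rfl (fun U hU => h1 U T (by simpa using hU) hT)] at h2
  simpa using h2

theorem central_sq (k : ℕ) : (Nat.centralBinom k) ^ 2 * (2 * k + 1) ≤ 16 ^ k := by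
  induction k with
  | zero => simp
  | succ k ih =>
    have h := Nat.succ_mul_centralBinom_succ k
    have h3 : ((k + 1) * Nat.centralBinom (k + 1)) ^ 2 * (2 * k + 3)
        ≤ (k + 1) ^ 2 * 16 ^ (k + 1) := by
      rw [h]
      calc (2 * (2 * k + 1) * k.centralBinom) ^ 2 * (2 * k + 3)
          = (k.centralBinom ^ 2 * (2 * k + 1)) * (4 * (2 * k + 1) * (2 * k + 3)) := by ring
        _ ≤ 16 ^ k * (16 * (k + 1) ^ 2) := by
            apply Nat.mul_le_mul ih; nlinarith
        _ = _ := by ring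
    have h4 : (k + 1) ^ 2 * ((Nat.centralBinom (k + 1)) ^ 2 * (2 * k + 3))
        ≤ (k + 1) ^ 2 * 16 ^ (k + 1) := by
      calc _ = ((k + 1) * Nat.centralBinom (k + 1)) ^ 2 * (2 * k + 3) := by ring
        _ ≤ _ := h3
    have := Nat.le_of_mul_le_mul_left h4 (by positivity)
    exact this

theorem choose_sq (K : ℕ) : (K.choose (K / 2)) ^ 2 * (K + 1) ≤ 4 ^ K := by
  rcases Nat.even_or_odd' K with ⟨k, rfl | rfl⟩
  · have := central_sq k
    rw [Nat.centralBinom_eq_two_mul_choose] at this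
    rw [show 2 * k / 2 = k by omega, pow_mul]
    exact this
  · have := central_sq (k + 1)
    rw [show (2 * k + 1) / 2 = k by omega]
    have e : Nat.centralBinom (k + 1) = 2 * (2 * k + 1).choose k := by
      rw [Nat.centralBinom_eq_two_mul_choose, show 2 * (k + 1) = (2 * k + 1) + 1 by ring,
        Nat.choose_succ_succ, Nat.choose_symm_half]
      ring
    rw [e] at this
    have e2 : 4 ^ (2 * k + 1) * 4 = 16 ^ (k + 1) := by
      rw [← pow_succ, show 2 * k + 1 + 1 = 2 * (k + 1) by ring, pow_mul]
      norm_num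
    nlinarith

theorem choose_le (K : ℕ) : (K.choose (K / 2) : ℝ) * Real.sqrt K ≤ 2 ^ K := by
  have h : ((K.choose (K / 2) : ℝ)) ^ 2 * (K + 1) ≤ 4 ^ K := by exact_mod_cast choose_sq K
  apply le_of_sq_le_sq _ (by positivity) 
  rw [mul_pow, Real.sq_sqrt (by positivity), ← pow_mul, mul_comm K 2, pow_mul]
  norm_num
  nlinarith [sq_nonneg (K.choose (K / 2) : ℝ)]

theorem anti {α : Type*} [Fintype α] [DecidableEq α] (x : α → ℝ) (δ : ℝ)
    (hx : ∀ a, δ < x a) (hδ : 0 < δ) (c : ℝ) :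
    ((univ : Finset (Finset α)).filter
      (fun S => c ≤ ∑ a ∈ S, x a ∧ ∑ a ∈ S, x a ≤ c + δ)).card
      ≤ (Fintype.card α).choose (Fintype.card α / 2) := by
  apply IsAntichain.sperner
  intro S hS T hT hne hsub
  simp only [coe_filter, mem_univ, true_and, Set.mem_ofPred_eq] at hS hT
  obtain ⟨a, haT, haS⟩ := Finset.exists_of_ssubset (hsub.ssubset_of_ne hne)
  have h1 : ∑ b ∈ insert a S, x b ≤ ∑ b ∈ T, x b :=
    Finset.sum_le_sum_of_subset_of_nonneg (Finset.insert_subset haT hsub)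
      (fun b _ _ => (hδ.trans (hx b)).le)
  rw [Finset.sum_insert haS] at h1
  linarith [hx a]

theorem LO1 {α : Type*} [Fintype α] [DecidableEq α] (x : α → ℝ) (δ : ℝ)
    (hx : ∀ a, 2 / 3 * δ < |x a|) (hδ : 0 < δ) (c : ℝ) :
    ((univ : Finset (Finset α)).filter
      (fun S => |c + ∑ a ∈ S, x a| ≤ δ)).card
      ≤ 3 * (Fintype.card α).choose (Fintype.card α / 2) := by
  let Ng : Finset α := univ.filter (fun a => x a < 0)
  let d := c + ∑ a ∈ Ng, x a
  have key : ∀ S : Finset α, ∑ a ∈ S, x a = ∑ a ∈ symmDiff S Ng, |x a| + ∑ a ∈ Ng, x a := by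
    intro S
    have : ∀ U : Finset α, ∀ f : α → ℝ, ∑ a ∈ U, f a = ∑ a, if a ∈ U then f a else 0 := by
      intro U f; simp
    rw [this S, this (symmDiff S Ng), this Ng, ← Finset.sum_add_distrib]
    refine Finset.sum_congr rfl fun a _ => ?_
    by_cases h1 : x a < 0
    · by_cases h2 : a ∈ S <;> simp [Finset.mem_symmDiff, Ng, h1, h2, abs_of_neg]
    · by_cases h2 : a ∈ S <;>
        simp [Finset.mem_symmDiff, Ng, h1, h2, abs_of_nonneg (not_lt.mp h1)]
  let B : ℝ → Finset (Finset α) := fun e => univ.filter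
    (fun S => e ≤ ∑ a ∈ S, |x a| ∧ ∑ a ∈ S, |x a| ≤ e + 2 / 3 * δ)
  have hB : ∀ e, (B e).card ≤ (Fintype.card α).choose (Fintype.card α / 2) := fun e =>
    anti (fun a => |x a|) (2 / 3 * δ) hx (by positivity) e
  have h1 : ((univ : Finset (Finset α)).filter (fun S => |c + ∑ a ∈ S, x a| ≤ δ)).card
      ≤ (B (-δ - d) ∪ B (-δ / 3 - d) ∪ B (δ / 3 - d)).card := by
    apply Finset.card_le_card_of_injOn (fun S => symmDiff S Ng)
    · intro S hS
      simp only [coe_filter, mem_univ, true_and, Set.mem_ofPred_eq] at hS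
      rw [key S, abs_le] at hS
      simp only [coe_union, Set.mem_union, B, coe_filter, mem_univ, true_and, Set.mem_ofPred_eq]
      have hd : d = c + ∑ a ∈ Ng, x a := rfl
      by_cases c1 : ∑ a ∈ symmDiff S Ng, |x a| ≤ -δ / 3 - d
      · left; left; constructor <;> linarith
      · by_cases c2 : ∑ a ∈ symmDiff S Ng, |x a| ≤ δ / 3 - d
        · left; right; constructor <;> linarith
        · right; constructor <;> linarith
    · intro S _ T _ h
      exact symmDiff_left_injective Ng h
  have h2 := Finset.card_union_le (B (-δ - d) ∪ B (-δ / 3 - d)) (B (δ / 3 - d))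
  have h3 := Finset.card_union_le (B (-δ - d)) (B (-δ / 3 - d))
  have := hB (-δ - d)
  have := hB (-δ / 3 - d)
  have := hB (δ / 3 - d)
  omega

theorem LO2 {ι : Type*} [Fintype ι] [DecidableEq ι] (x : ι → ℝ) (δ : ℝ) (A : Finset ι)
    (hx : ∀ a ∈ A, 2 / 3 * δ < |x a|) (hδ : 0 < δ) (c : ℝ) :
    ((univ : Finset (Finset ι)).filter
      (fun S => |c + ∑ a ∈ S, x a| ≤ δ)).card
      ≤ 2 ^ (Fintype.card ι - A.card) * (3 * A.card.choose (A.card / 2)) := by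
  have h0 : (Aᶜ.powerset).card = 2 ^ (Fintype.card ι - A.card) := by
    rw [Finset.card_powerset, Finset.card_compl]
  rw [← h0, mul_comm]
  apply Finset.card_le_mul_card_image_of_maps_to (f := fun S => S \ A)
  · intro S _
    rw [Finset.mem_powerset]
    intro a ha
    simp at ha ⊢
    exact ha.2
  · intro B _
    have h1 := LO1 (α := A) (fun a => x a) δ (fun a => hx a a.2) hδ (c + ∑ a ∈ B, x a)
    rw [Fintype.card_coe] at h1
    refine le_trans ?_ h1
    apply Finset.card_le_card_of_injOn (fun S => S.subtype (· ∈ A))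
    · intro S hS
      simp only [coe_filter, mem_univ, true_and, Set.mem_ofPred_eq, mem_filter] at hS ⊢
      obtain ⟨hS, rfl⟩ := hS
      have e1 : ∑ a ∈ S.subtype (· ∈ A), x a = ∑ a ∈ S ∩ A, x a := by
        rw [Finset.sum_subtype_eq_sum_filter, Finset.filter_mem_eq_inter]
      rw [e1, add_assoc, add_comm (∑ a ∈ S \ A, x a), Finset.sum_inter_add_sum_sdiff]
      exact hS
    · intro S hS T hT h
      simp only [coe_filter, mem_univ, true_and, Set.mem_ofPred_eq, mem_filter] at hS hT
      ext a
      by_cases ha : a ∈ A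
      · have := Finset.ext_iff.mp h ⟨a, ha⟩
        simpa using this
      · have := Finset.ext_iff.mp (hS.2.trans hT.2.symm) a
        simpa [ha] using this

/-- normalized real version -/
theorem LO3 {ι : Type*} [Fintype ι] [DecidableEq ι] (x : ι → ℝ) (δ : ℝ) (A : Finset ι)
    (hx : ∀ a ∈ A, 2 / 3 * δ < |x a|) (hδ : 0 < δ) (c : ℝ) :
    (((univ : Finset (Finset ι)).filter
      (fun S => |c + ∑ a ∈ S, x a| ≤ δ)).card : ℝ) * Real.sqrt A.card
      ≤ 3 * 2 ^ (Fintype.card ι) := by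
  have h1 : (((univ : Finset (Finset ι)).filter (fun S => |c + ∑ a ∈ S, x a| ≤ δ)).card : ℝ)
      ≤ 2 ^ (Fintype.card ι - A.card) * (3 * A.card.choose (A.card / 2)) := by
    exact_mod_cast LO2 x δ A hx hδ c
  have h2 := choose_le A.card
  have h3 : (2 : ℝ) ^ (Fintype.card ι - A.card) * 2 ^ A.card = 2 ^ Fintype.card ι := by
    rw [← pow_add, Nat.sub_add_cancel (Finset.card_le_univ A)]
  calc _ ≤ 2 ^ (Fintype.card ι - A.card) * (3 * A.card.choose (A.card / 2)) * Real.sqrt A.card := by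
        gcongr
    _ = 3 * (2 ^ (Fintype.card ι - A.card) * (A.card.choose (A.card / 2) * Real.sqrt A.card)) := by
        ring
    _ ≤ 3 * (2 ^ (Fintype.card ι - A.card) * 2 ^ A.card) := by gcongr
    _ = _ := by rw [h3]

theorem LOC {ι : Type*} [Fintype ι] [DecidableEq ι] (w : ι → ℂ) (δ : ℝ) (hδ : 0 < δ) (c : ℂ)
    (r : ℝ) (hr : 2 * r ≤ ((univ.filter (fun a => δ < ‖w a‖)).card : ℝ)) :
    (((univ : Finset (Finset ι)).filter
      (fun S => ‖c + ∑ a ∈ S, w a‖ ≤ δ)).card : ℝ) * Real.sqrt r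
      ≤ 3 * 2 ^ (Fintype.card ι) := by
  let A := univ.filter (fun a => 2 / 3 * δ < |(w a).re|)
  let B := univ.filter (fun a => 2 / 3 * δ < |(w a).im|)
  have hsub : univ.filter (fun a => δ < ‖w a‖) ⊆ A ∪ B := by
    intro a ha
    simp only [A, B, mem_union, mem_filter, mem_univ, true_and] at ha ⊢
    by_contra! h
    have h1 : ‖w a‖ ^ 2 = |(w a).re| ^ 2 + |(w a).im| ^ 2 := by
      rw [Complex.sq_norm, Complex.normSq_apply, sq_abs, sq_abs]; ring
    have := abs_nonneg (w a).re
    have := abs_nonneg (w a).im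
    nlinarith [h.1, h.2]
  have hc : ((univ.filter (fun a => δ < ‖w a‖)).card : ℝ) ≤ A.card + B.card := by
    exact_mod_cast (Finset.card_le_card hsub).trans (Finset.card_union_le A B)
  by_cases hA : r ≤ A.card
  · have := LO3 (fun a => (w a).re) δ A (by simp [A]) hδ c.re
    refine le_trans ?_ this
    gcongr with S
    have := Complex.abs_re_le_norm (c + ∑ a ∈ S, w a)
    simpa using this
  · have hB : r ≤ B.card := by linarith
    have := LO3 (fun a => (w a).im) δ B (by simp [B]) hδ c.im
    refine le_trans ?_ this
    gcongr with S
    have := Complex.abs_im_le_norm (c + ∑ a ∈ S, w a)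
    simpa using this


def emb2 {n : ℕ} (a b : Fin n) (h : a ≠ b) : Fin 2 ↪ Fin n :=
  ⟨![a, b], by
    intro i j hij
    fin_cases i <;> fin_cases j <;> simp_all [eq_comm]⟩

def emb4 {n : ℕ} (a b c d : Fin n) (h1 : a ≠ b) (h2 : a ≠ c) (h3 : a ≠ d) (h4 : b ≠ c)
    (h5 : b ≠ d) (h6 : c ≠ d) : Fin 4 ↪ Fin n :=
  ⟨![a, b, c, d], by
    intro i j hij
    fin_cases i <;> fin_cases j <;> simp_all [eq_comm]⟩

theorem pair_avg {n : ℕ} (P : Fin n → Fin n → Prop) [∀ i j, Decidable (P i j)]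
    (a b : Fin n) (h : a ≠ b) (hn : 1 ≤ n) :
    ((n : ℝ) * (n - 1)) * ∑ g : Equiv.Perm (Fin n), (if P (g a) (g b) then (1 : ℝ) else 0) =
      Fintype.card (Equiv.Perm (Fin n)) *
      ((univ.filter (fun t : Fin 2 ↪ Fin n => P (t 0) (t 1))).card : ℝ) := by
  have := Equiv.Perm.isMultiplyPretransitive (Fin n) 2
  have h1 := avg (G := Equiv.Perm (Fin n)) (X := Fin 2 ↪ Fin n)
    (fun t => if P (t 0) (t 1) then (1 : ℝ) else 0) (emb2 a b h)
  rw [Fintype.card_embedding_eq] at h1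
  simp only [Fintype.card_fin, Function.Embedding.smul_apply] at h1
  rw [Finset.card_filter]
  push_cast
  rw [← h1]
  have e : ((n.descFactorial 2 : ℕ) : ℝ) = n * (n - 1) := by
    simp [Nat.descFactorial_succ, Nat.cast_sub hn]; ring
  rw [e]
  rfl

theorem quad_avg {n : ℕ} (P : Fin n → Fin n → Prop) [∀ i j, Decidable (P i j)]
    (a b c d : Fin n) (h1 : a ≠ b) (h2 : a ≠ c) (h3 : a ≠ d) (h4 : b ≠ c)
    (h5 : b ≠ d) (h6 : c ≠ d) (hn : 4 ≤ n) :
    ((n : ℝ) * (n - 1) * (n - 2) * (n - 3)) * ∑ g : Equiv.Perm (Fin n),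
      ((if P (g a) (g b) then (1 : ℝ) else 0) * (if P (g c) (g d) then (1 : ℝ) else 0)) ≤
      Fintype.card (Equiv.Perm (Fin n)) *
      ((univ.filter (fun t : Fin 2 ↪ Fin n => P (t 0) (t 1))).card : ℝ) ^ 2 := by
  have := Equiv.Perm.isMultiplyPretransitive (Fin n) 4
  have h1 := avg (G := Equiv.Perm (Fin n)) (X := Fin 4 ↪ Fin n)
    (fun t => (if P (t 0) (t 1) then (1 : ℝ) else 0) * (if P (t 2) (t 3) then (1 : ℝ) else 0))
    (emb4 a b c d h1 h2 h3 h4 h5 h6)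
  rw [Fintype.card_embedding_eq] at h1
  simp only [Fintype.card_fin, Function.Embedding.smul_apply] at h1
  have e : ((n.descFactorial 4 : ℕ) : ℝ) = (n : ℝ) * (n - 1) * (n - 2) * (n - 3) := by
    simp [Nat.descFactorial_succ, Nat.cast_sub (show 1 ≤ n by omega),
      Nat.cast_sub (show 2 ≤ n by omega), Nat.cast_sub (show 3 ≤ n by omega)]; ring
  rw [e] at h1
  refine (le_of_eq h1).trans ?_
  gcongr
  have e2 : ∑ t : Fin 4 ↪ Fin n, ((if P (t 0) (t 1) then (1 : ℝ) else 0) *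
      (if P (t 2) (t 3) then (1 : ℝ) else 0)) =
      ((univ.filter (fun t : Fin 4 ↪ Fin n => P (t 0) (t 1) ∧ P (t 2) (t 3))).card : ℝ) := by
    rw [Finset.card_filter]
    push_cast
    refine Finset.sum_congr rfl fun t _ => ?_
    by_cases c1 : P (t 0) (t 1) <;> by_cases c2 : P (t 2) (t 3) <;> simp [c1, c2]
  rw [e2, sq]
  norm_cast
  rw [← Finset.card_product]
  apply Finset.card_le_card_of_injOn (fun t =>
    (emb2 (t 0) (t 1) (by simp), emb2 (t 2) (t 3) (by simp)))
  · intro t ht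
    have ht2 : P (t 0) (t 1) ∧ P (t 2) (t 3) := by simpa using ht
    simp only [coe_product, Set.mem_prod, coe_filter, mem_univ, true_and, Set.mem_ofPred_eq]
    exact ht2
  · intro s _ t _ h
    simp only [Prod.mk.injEq] at h
    have q0 : s 0 = t 0 := DFunLike.congr_fun h.1 0
    have q1 : s 1 = t 1 := DFunLike.congr_fun h.1 1
    have q2 : s 2 = t 2 := DFunLike.congr_fun h.2 0
    have q3 : s 3 = t 3 := DFunLike.congr_fun h.2 1
    ext i
    fin_cases i <;> simp [q0, q1, q2, q3]

theorem small_bound {n m : ℕ} (P : Fin n → Fin n → Prop) [∀ i j, Decidable (P i j)]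
    (a b : Fin m → Fin n) (ha : Function.Injective a) (hb : Function.Injective b)
    (hab : ∀ k l, a k ≠ b l) (hn : 4 ≤ n) (hm : 1 ≤ m) (hmn : 2 * m ≤ n) (γ : ℝ) (hγ : 0 < γ)
    (hD : γ * n ^ 2 ≤ ((univ.filter (fun t : Fin 2 ↪ Fin n => P (t 0) (t 1))).card : ℝ)) :
    ((univ.filter (fun g : Equiv.Perm (Fin n) =>
      ((univ.filter (fun k => P (g (a k)) (g (b k)))).card : ℝ) < γ * m / 2)).card : ℝ) * (γ * m) ≤
      44 * Fintype.card (Equiv.Perm (Fin n)) := by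
  classical
  set D : ℝ := ((univ.filter (fun t : Fin 2 ↪ Fin n => P (t 0) (t 1))).card : ℝ) with hDdef
  set L : ℝ := (Fintype.card (Equiv.Perm (Fin n)) : ℝ) with hL
  have hLpos : 0 < L := by rw [hL]; exact_mod_cast Fintype.card_pos
  set N : Equiv.Perm (Fin n) → ℝ := fun g => ((univ.filter (fun k => P (g (a k)) (g (b k)))).card : ℝ)
    with hN
  let I : Fin m → Equiv.Perm (Fin n) → ℝ := fun k g => if P (g (a k)) (g (b k)) then (1 : ℝ) else 0
  have hNI : ∀ g, N g = ∑ k, I k g := by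
    intro g; simp only [hN, I]; rw [Finset.card_filter]; push_cast; rfl
  have hn' : (4 : ℝ) ≤ n := by exact_mod_cast hn
  have hm' : (1 : ℝ) ≤ m := by exact_mod_cast hm
  have hmn' : 2 * (m : ℝ) ≤ n := by exact_mod_cast hmn
  have hnn : 0 < (n : ℝ) * (n - 1) := by apply mul_pos <;> linarith
  set p : ℝ := D / (n * (n - 1)) with hp
  have hDp : D = p * (n * (n - 1)) := (div_mul_cancel₀ D hnn.ne').symm
  have hD0 : 0 ≤ D := Nat.cast_nonneg _
  have hpγ : γ ≤ p := by
    rw [hp, le_div_iff₀ hnn]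
    nlinarith
  have hp0 : 0 < p := lt_of_lt_of_le hγ hpγ
  have hp1 : p ≤ 1 := by
    rw [hp, div_le_one hnn]
    have : D ≤ (Fintype.card (Fin 2 ↪ Fin n) : ℝ) := by
      rw [hDdef]; exact_mod_cast Finset.card_le_univ _
    rw [Fintype.card_embedding_eq] at this
    have e : ((n.descFactorial 2 : ℕ) : ℝ) = n * (n - 1) := by
      simp [Nat.descFactorial_succ, Nat.cast_sub (show 1 ≤ n by omega)]; ring
    rw [Fintype.card_fin, Fintype.card_fin, e] at this
    exact this
  have hI1 : ∀ k, ∑ g, I k g = L * p := by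
    intro k
    have := pair_avg P (a k) (b k) (hab k k) (by omega)
    rw [← hDdef, ← hL, hDp] at this
    have e : ((n : ℝ) * (n - 1)) * ∑ g, I k g = (n * (n - 1)) * (L * p) := by
      rw [this]; ring
    exact mul_left_cancel₀ hnn.ne' e
  have hQ : 0 < ((n : ℝ) - 2) * (n - 3) := by apply mul_pos <;> linarith
  set R : ℝ := n * (n - 1) / ((n - 2) * (n - 3)) with hR
  have hI2 : ∀ k l, k ≠ l → ∑ g, I k g * I l g ≤ L * (p ^ 2 * R) := by
    intro k l hkl
    have := quad_avg P (a k) (b k) (a l) (b l) (hab k k) (ha.ne hkl) (hab k l) (hab l k).symm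
      (hb.ne hkl) (hab l l) hn
    rw [← hDdef, ← hL, hDp] at this
    have e : ((n : ℝ) * (n - 1)) * (((n : ℝ) - 2) * (n - 3)) * ∑ g, I k g * I l g ≤
        ((n : ℝ) * (n - 1)) * (((n : ℝ) - 2) * (n - 3)) * (L * (p ^ 2 * R)) := by
      calc _ ≤ L * (p * (↑n * (↑n - 1))) ^ 2 := by
            refine le_trans (le_of_eq ?_) this
            ring
        _ = ((n : ℝ) * (n - 1)) * (L * (p ^ 2 * (R * (((n : ℝ) - 2) * (n - 3))))) := by
            rw [hR, div_mul_cancel₀ _ hQ.ne']; ring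
        _ = _ := by ring
    exact le_of_mul_le_mul_left e (mul_pos hnn hQ)
  clear hDp hp
  clear_value p
  have hR2 : ((m : ℝ) - 1) * R ≤ m + 10 := by
    rw [hR, ← mul_div_assoc, div_le_iff₀ hQ]
    nlinarith [mul_nonneg (sub_nonneg.2 hmn') (sub_nonneg.2 hn')]
  have hS1 : ∑ g, N g = m * (L * p) := by
    simp only [hNI]
    rw [Finset.sum_comm, Finset.sum_congr rfl (fun k _ => hI1 k)]
    simp
  have hS2 : ∑ g, N g ^ 2 ≤ m * (L * p) + m * (m - 1) * (L * (p ^ 2 * R)) := by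
    have : ∑ g, N g ^ 2 = ∑ k, ∑ l, ∑ g, I k g * I l g := by
      simp only [hNI, sq, Finset.sum_mul_sum]
      rw [Finset.sum_comm]
      refine Finset.sum_congr rfl fun k _ => ?_
      rw [Finset.sum_comm]
    rw [this]
    have h1 : ∀ k : Fin m, ∑ l, ∑ g, I k g * I l g ≤ L * p + (m - 1) * (L * (p ^ 2 * R)) := by
      intro k
      rw [← Finset.add_sum_erase _ _ (Finset.mem_univ k)]
      apply add_le_add
      · rw [← hI1 k]
        apply le_of_eq
        refine Finset.sum_congr rfl fun g _ => ?_
        simp only [I]; split_ifs <;> simp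
      · refine (Finset.sum_le_card_nsmul _ _ (L * (p ^ 2 * R)) ?_).trans (le_of_eq ?_)
        · intro l hl
          exact hI2 k l (Finset.ne_of_mem_erase hl).symm
        · rw [Finset.card_erase_of_mem (Finset.mem_univ k), nsmul_eq_mul]
          simp [Nat.cast_sub hm]
    refine (Finset.sum_le_sum fun k _ => h1 k).trans (le_of_eq ?_)
    simp; ring
  have hV : ∑ g, (N g - m * p) ^ 2 ≤ 11 * (m * p) * L := by
    have e : ∑ g, (N g - m * p) ^ 2 = ∑ g, N g ^ 2 - 2 * (m * p) * ∑ g, N g + L * (m * p) ^ 2 := by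
      rw [Finset.mul_sum, ← Finset.sum_sub_distrib]
      have : L * (m * p) ^ 2 = ∑ g : Equiv.Perm (Fin n), (m * p) ^ 2 := by
        simp [hL]
      rw [this, ← Finset.sum_add_distrib]
      refine Finset.sum_congr rfl fun g _ => ?_
      ring
    rw [e, hS1]
    have h3 : m * (m - 1) * (L * (p ^ 2 * R)) ≤ m * (L * p ^ 2) * (m + 10) := by
      calc _ = m * (L * p ^ 2) * ((m - 1) * R) := by ring
        _ ≤ _ := by gcongr
    have h4 : m * (L * p ^ 2) ≤ m * (L * p) := by
      gcongr
      nlinarith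
    nlinarith
  set B := univ.filter (fun g : Equiv.Perm (Fin n) => N g < γ * m / 2) with hB
  have hC : (B.card : ℝ) * ((m * p) ^ 2 / 4) ≤ 11 * (m * p) * L := by
    refine le_trans ?_ hV
    calc (B.card : ℝ) * ((m * p) ^ 2 / 4) = ∑ g ∈ B, (m * p) ^ 2 / 4 := by simp
      _ ≤ ∑ g ∈ B, (N g - m * p) ^ 2 := by
          apply Finset.sum_le_sum
          intro g hg
          have hg : N g < γ * m / 2 := by simpa [hB] using hg
          have : γ * m ≤ m * p := by nlinarith
          have : 0 < m * p := by positivity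
          nlinarith
      _ ≤ _ := Finset.sum_le_sum_of_subset_of_nonneg (Finset.subset_univ _)
          (fun _ _ _ => sq_nonneg _)
  have hmp : 0 < m * p := by positivity
  have hE : (B.card : ℝ) * (m * p) ≤ 44 * L := by
    refine le_of_mul_le_mul_right ?_ hmp
    nlinarith
  refine le_trans ?_ hE
  rw [mul_comm (m : ℝ) p]
  gcongr

theorem D_bound {n : ℕ} (v : Fin n → ℂ) (δ γ : ℝ) (hδ : 0 < δ)
    (hv : ∀ θ : ℂ, (({i : Fin n | ‖v i - θ‖ ≤ δ}).ncard : ℝ) ≤ (1 - γ) * n) :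
    γ * n ^ 2 ≤
      ((univ.filter (fun t : Fin 2 ↪ Fin n => δ < ‖v (t 0) - v (t 1)‖)).card : ℝ) := by
  classical
  have h1 : ∀ j : Fin n, γ * n ≤ ((univ.filter (fun i => δ < ‖v i - v j‖)).card : ℝ) := by
    intro j
    have h := hv (v j)
    have e : ({i : Fin n | ‖v i - v j‖ ≤ δ}).ncard = (univ.filter (fun i => ‖v i - v j‖ ≤ δ)).card := by
      rw [← Set.ncard_coe_finset]; simp
    rw [e] at h
    have h2 := Finset.card_filter_add_card_filter_not (s := (univ : Finset (Fin n)))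
      (fun i => ‖v i - v j‖ ≤ δ)
    simp only [not_le, Finset.card_univ, Fintype.card_fin] at h2
    have h3 : ((univ.filter (fun i => ‖v i - v j‖ ≤ δ)).card : ℝ) +
      ((univ.filter (fun i => δ < ‖v i - v j‖)).card : ℝ) = n := by exact_mod_cast h2
    linarith
  have h2 : (∑ j : Fin n, (univ.filter (fun i => δ < ‖v i - v j‖)).card) ≤
      (univ.filter (fun t : Fin 2 ↪ Fin n => δ < ‖v (t 0) - v (t 1)‖)).card := by
    rw [← Finset.card_sigma]
    have hne : ∀ i j, δ < ‖v i - v j‖ → i ≠ j := by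
      rintro i j h rfl
      simp at h; linarith
    apply Finset.card_le_card_of_surjOn (fun t : Fin 2 ↪ Fin n => (⟨t 1, t 0⟩ : (_ : Fin n) × Fin n))
    rintro ⟨j, i⟩ h
    have h' : δ < ‖v i - v j‖ := by simpa using h
    refine ⟨emb2 i j (hne i j h'), ?_, rfl⟩
    simp only [coe_filter, mem_univ, true_and, Set.mem_ofPred_eq]
    exact h'
  have h3 : ∑ j : Fin n, γ * (n : ℝ) ≤
      ∑ j : Fin n, ((univ.filter (fun i => δ < ‖v i - v j‖)).card : ℝ) :=
    Finset.sum_le_sum fun j _ => h1 j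
  have h4 : ∑ j : Fin n, ((univ.filter (fun i => δ < ‖v i - v j‖)).card : ℝ) ≤
      ((univ.filter (fun t : Fin 2 ↪ Fin n => δ < ‖v (t 0) - v (t 1)‖)).card : ℝ) := by
    exact_mod_cast h2
  refine le_trans (le_of_eq ?_) (h3.trans h4)
  simp; ring

theorem main {n m : ℕ} (v : Fin n → ℂ) (δ γ : ℝ) (hδ : 0 < δ) (hγ : 0 < γ) (hγ1 : γ < 1)
    (hv : ∀ θ : ℂ, (({i : Fin n | ‖v i - θ‖ ≤ δ}).ncard : ℝ) ≤ (1 - γ) * n)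
    (hm : 1 ≤ m) (hmn : 2 * m ≤ n) (hγm : 1 ≤ γ * m) (z : ℂ) :
    ((((univ : Finset (Fin n)).powersetCard m).filter
        (fun T => ‖(∑ i ∈ T, v i) - z‖ ≤ δ)).card : ℝ) * Real.sqrt (γ * m) ≤
      50 * (((univ : Finset (Fin n)).powersetCard m).card : ℝ) := by
  classical
  have hm2 : 2 ≤ m := by
    by_contra h
    have : m = 1 := by omega
    subst this
    simp at hγm; linarith
  let P : Fin n → Fin n → Prop := fun i j => δ < ‖v i - v j‖
  let a : Fin m → Fin n := fun k => ⟨k, by omega⟩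
  let b : Fin m → Fin n := fun k => ⟨m + k, by omega⟩
  have ha : Function.Injective a := by
    intro k l h; simp only [a, Fin.mk.injEq] at h; exact Fin.ext h
  have hb : Function.Injective b := by
    intro k l h; simp only [b, Fin.mk.injEq] at h; exact Fin.ext (by omega)
  have hab : ∀ k l, a k ≠ b l := by
    intro k l h; simp only [a, b, Fin.mk.injEq] at h; omega
  have hsmall := small_bound P a b ha hb hab (by omega) hm hmn γ hγ (D_bound v δ γ hδ hv)
  let bad : Finset (Fin n) → Prop := fun T => ‖(∑ i ∈ T, v i) - z‖ ≤ δ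
  let f : Finset (Fin m) → Fin m ↪ Fin n := fun S => ⟨fun k => if k ∈ S then a k else b k, by
    intro k l h
    dsimp only at h
    split_ifs at h
    · exact ha h
    · exact absurd h (hab _ _)
    · exact absurd h.symm (hab _ _)
    · exact hb h⟩
  set M : ℝ := (((univ : Finset (Fin n)).powersetCard m).card : ℝ) with hM
  set L : ℝ := (Fintype.card (Equiv.Perm (Fin n)) : ℝ) with hL
  have hLpos : 0 < L := by rw [hL]; exact_mod_cast Fintype.card_pos
  set X : ℝ := ((((univ : Finset (Fin n)).powersetCard m).filter bad).card : ℝ) with hX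
  set q : ℝ := Real.sqrt (γ * m) with hq
  have hq1 : 1 ≤ q := by rw [hq]; exact Real.one_le_sqrt.mpr hγm
  have hqq : q * q = γ * m := Real.mul_self_sqrt (by linarith)
  let c : Equiv.Perm (Fin n) → ℝ := fun g =>
    ((univ.filter (fun S : Finset (Fin m) => bad ((univ.map (f S)).map g.toEmbedding))).card : ℝ)
  have havg : M * ∑ g, c g = 2 ^ m * (L * X) := by
    have h1 : ∀ S : Finset (Fin m), M * ∑ g : Equiv.Perm (Fin n),
        (if bad ((univ.map (f S)).map g.toEmbedding) then (1 : ℝ) else 0) = L * X :=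
      fun S => avg_slice bad (univ.map (f S)) (by simp)
    have h2 : ∑ g, c g = ∑ S : Finset (Fin m), ∑ g : Equiv.Perm (Fin n),
        (if bad ((univ.map (f S)).map g.toEmbedding) then (1 : ℝ) else 0) := by
      rw [Finset.sum_comm]
      refine Finset.sum_congr rfl fun g _ => ?_
      simp only [c]
      rw [Finset.card_filter]; push_cast; rfl
    rw [h2, Finset.mul_sum, Finset.sum_congr rfl (fun S _ => h1 S)]
    simp
  set B := univ.filter (fun g : Equiv.Perm (Fin n) =>
      ((univ.filter (fun k => P (g (a k)) (g (b k)))).card : ℝ) < γ * m / 2) with hB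
  have hc : ∀ g, c g * q ≤ 6 * 2 ^ m + (if g ∈ B then 2 ^ m * q else 0) := by
    intro g
    split_ifs with hg
    · have : c g ≤ 2 ^ m := by
        have : (univ.filter (fun S : Finset (Fin m) =>
          bad ((univ.map (f S)).map g.toEmbedding))).card ≤ 2 ^ m := by
          refine (Finset.card_le_univ _).trans (by simp)
        have h3 := (Nat.cast_le (α := ℝ)).mpr this
        push_cast at h3
        exact h3
      have h2 : (0 : ℝ) < 2 ^ m := by positivity
      nlinarith
    · have hg' : γ * m / 2 ≤ ((univ.filter (fun k => P (g (a k)) (g (b k)))).card : ℝ) := by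
        simpa [hB] using hg
      have := LOC (fun k => v (g (a k)) - v (g (b k))) δ hδ (∑ k, v (g (b k)) - z) (γ * m / 4)
        (by refine le_trans (le_of_eq ?_) hg'; ring)
      have e1 : Real.sqrt (γ * m / 4) = q / 2 := by
        rw [Real.sqrt_div (by linarith), show (4 : ℝ) = 2 ^ 2 by norm_num,
          Real.sqrt_sq (by norm_num)]
      have e2 : ∀ S : Finset (Fin m), bad ((univ.map (f S)).map g.toEmbedding) ↔
          ‖(∑ k, v (g (b k)) - z) + ∑ k ∈ S, (v (g (a k)) - v (g (b k)))‖ ≤ δ := by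
        intro S
        simp only [bad]
        have : ∑ i ∈ (univ.map (f S)).map g.toEmbedding, v i - z =
            (∑ k, v (g (b k)) - z) + ∑ k ∈ S, (v (g (a k)) - v (g (b k))) := by
          rw [Finset.sum_map, Finset.sum_map]
          have h5 : ∑ k ∈ S, (v (g (a k)) - v (g (b k))) =
            ∑ k, if k ∈ S then (v (g (a k)) - v (g (b k))) else 0 := by simp
          rw [h5, sub_add_eq_add_sub, ← Finset.sum_add_distrib]
          congr 1
          refine Finset.sum_congr rfl fun k _ => ?_
          have hf : f S k = if k ∈ S then a k else b k := rfl
          simp only [Equiv.coe_toEmbedding, hf]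
          by_cases hk : k ∈ S <;> simp [hk]
        rw [this]
      have e3 : c g = ((univ.filter (fun S : Finset (Fin m) =>
        ‖(∑ k, v (g (b k)) - z) + ∑ k ∈ S, (v (g (a k)) - v (g (b k)))‖ ≤ δ)).card : ℝ) := by
        simp only [c, e2]
      rw [e1, ← e3] at this
      simp only [Fintype.card_fin] at this
      linarith
  have hsum : (∑ g, c g) * q ≤ 50 * 2 ^ m * L := by
    rw [Finset.sum_mul]
    refine (Finset.sum_le_sum fun g _ => hc g).trans ?_
    rw [Finset.sum_add_distrib, ← Finset.sum_filter]
    have e5 : ∑ g ∈ univ.filter (fun g => g ∈ B), (2 : ℝ) ^ m * q = 2 ^ m * (B.card * q) := by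
      simp; ring
    have e6 : ∑ g : Equiv.Perm (Fin n), 6 * (2 : ℝ) ^ m = 6 * 2 ^ m * L := by
      rw [Finset.sum_const, nsmul_eq_mul, Finset.card_univ, ← hL]; ring
    rw [e5, e6]
    have e7 : (B.card : ℝ) * q ≤ 44 * L := by
      refine le_trans ?_ hsmall
      rw [← hqq]
      gcongr
      nlinarith
    have : (2 : ℝ) ^ m * (B.card * q) ≤ 2 ^ m * (44 * L) := by gcongr
    linarith
  have hfin : (2 ^ m * L) * (X * q) ≤ (2 ^ m * L) * (50 * M) := by
    calc _ = (2 ^ m * (L * X)) * q := by ring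
      _ = M * ((∑ g, c g) * q) := by rw [← havg]; ring
      _ ≤ M * (50 * 2 ^ m * L) := by gcongr
      _ = _ := by ring
  exact le_of_mul_le_mul_left hfin (by positivity)

end SliceAC

theorem slice_anticoncentration :
    ∃ C : ℝ, 0 < C ∧
      ∀ (δ γ : ℝ) (n m : ℕ), 0 < δ → γ ∈ Set.Ioo (0 : ℝ) 1 →
        1 ≤ m → 2 * m ≤ n →
        ∀ v : Fin n → ℂ,
          (∀ θ : ℂ, (({i : Fin n | ‖v i - θ‖ ≤ δ}).ncard : ℝ) ≤ (1 - γ) * n) →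
          ∀ z : ℂ,
            ((((Finset.univ : Finset (Fin n)).powersetCard m).filter
                (fun T => ‖(∑ i ∈ T, v i) - z‖ ≤ δ)).card : ℝ) /
              (((Finset.univ : Finset (Fin n)).powersetCard m).card : ℝ) ≤
            C * ((γ * m) ^ (-(1 / 2 : ℝ)) + Real.exp (-(γ ^ 2 * m) / C)) := by
  refine ⟨50, by norm_num, ?_⟩
  intro δ γ n m hδ hγ hm hmn v hv z
  have hm' : (1 : ℝ) ≤ m := by exact_mod_cast hm
  have hγm : 0 < γ * m := mul_pos hγ.1 (by linarith)
  have hexp := Real.exp_pos (-(γ ^ 2 * m) / 50)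
  have hM : 0 < (((Finset.univ : Finset (Fin n)).powersetCard m).card : ℝ) := by
    have : 0 < ((Finset.univ : Finset (Fin n)).powersetCard m).card := by
      rw [Finset.card_powersetCard]
      apply Nat.choose_pos
      simp; omega
    exact_mod_cast this
  have hr : (γ * m) ^ (-(1 / 2 : ℝ)) = (Real.sqrt (γ * m))⁻¹ := by
    rw [Real.rpow_neg hγm.le, Real.sqrt_eq_rpow]
  rw [hr]
  have hsq : 0 < Real.sqrt (γ * m) := Real.sqrt_pos.mpr hγm
  suffices h : ((((Finset.univ : Finset (Fin n)).powersetCard m).filter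
                (fun T => ‖(∑ i ∈ T, v i) - z‖ ≤ δ)).card : ℝ) /
              (((Finset.univ : Finset (Fin n)).powersetCard m).card : ℝ) ≤
            50 * (Real.sqrt (γ * m))⁻¹ by linarith
  by_cases h1 : 1 ≤ γ * m
  · have := SliceAC.main v δ γ hδ hγ.1 hγ.2 hv hm hmn h1 z
    rw [div_le_iff₀ hM, ← div_eq_mul_inv, div_mul_eq_mul_div, le_div_iff₀ hsq]
    exact this
  · have h2 : 1 ≤ (Real.sqrt (γ * m))⁻¹ := by
      rw [one_le_inv₀ hsq]
      exact Real.sqrt_le_one.mpr (not_le.mp h1).le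
    have h3 : ((((Finset.univ : Finset (Fin n)).powersetCard m).filter
                (fun T => ‖(∑ i ∈ T, v i) - z‖ ≤ δ)).card : ℝ) /
              (((Finset.univ : Finset (Fin n)).powersetCard m).card : ℝ) ≤ 1 := by
      rw [div_le_one hM]
      exact_mod_cast Finset.card_filter_le _ _
    linarith
end
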